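/- Let Λ > 0, κ > 0 and R > √(3/Λ). There exist ε₀ > 0 and C* > 0 (depending only on Λ, κ, R) such that for every h₀ ∈ C¹([0,R]) with sup_{0≤r≤R}|h₀(r)| + sup_{0≤r≤R}|h₀'(r)| < ε₀, there exists a unique C¹ solution h : [0,∞)×[0,R] → ℝ of the reduced Einstein-Λ-scalar field equation Dh = G(h − h̄) with h(0,·) = h₀; moreover this solution satisfies sup_{u≥0, 0≤r≤R}|h(u,r)| = sup_{0≤r≤R}|h₀(r)| and sup_{u≥0, 0≤r≤R}(|h(u,r)| + |∂_r h(u,r)|) ≤ (1+C*)·(sup_{0≤r≤R}|h₀(r)| + sup_{0≤r≤R}|h₀'(r)|). -/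

import Mathlib

noncomputable section

open Real Set

/-- Radial average `h̄(u,r) = (1/r)∫₀ʳ h(u,s) ds`, with `h̄(u,0) = h(u,0)`. -/
def radAvg (h : ℝ → ℝ → ℝ) (u r : ℝ) : ℝ :=
  if r = 0 then h u 0 else (1 / r) * ∫ s in (0:ℝ)..r, h u s

/-- Metric coefficient `f(u,r) = exp((κ/2)∫₀ʳ (h−h̄)²/s ds)`. -/
def metricF (κ : ℝ) (h : ℝ → ℝ → ℝ) (u r : ℝ) : ℝ :=
  Real.exp ((κ / 2) * ∫ s in (0:ℝ)..r, (h u s - radAvg h u s) ^ 2 / s)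

/-- Metric coefficient `f̃(u,r) = (1/r)∫₀ʳ f ds − (Λ/r)∫₀ʳ f s² ds`, with `f̃(u,0)=1`. -/
def metricFt (Λ κ : ℝ) (h : ℝ → ℝ → ℝ) (u r : ℝ) : ℝ :=
  if r = 0 then 1
  else (1 / r) * (∫ s in (0:ℝ)..r, metricF κ h u s)
    - (Λ / r) * (∫ s in (0:ℝ)..r, metricF κ h u s * s ^ 2)

/-- Zeroth order coefficient `G(u,r) = (1/(2r))[(f − f̃) − Λ f r²]`. -/
def coefG (Λ κ : ℝ) (h : ℝ → ℝ → ℝ) (u r : ℝ) : ℝ :=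
  (1 / (2 * r)) * ((metricF κ h u r - metricFt Λ κ h u r) - Λ * metricF κ h u r * r ^ 2)

/-- Partial derivative of `h` in the Bondi time `u`, one-sided on `[0,∞)`. -/
def pdU (h : ℝ → ℝ → ℝ) (u r : ℝ) : ℝ :=
  derivWithin (fun u' => h u' r) (Ici 0) u

/-- Partial derivative of `h` in the radial coordinate `r`, on `[0,R]`. -/
def pdR (R : ℝ) (h : ℝ → ℝ → ℝ) (u r : ℝ) : ℝ :=
  derivWithin (fun r' => h u r') (Icc 0 R) r

/-- `h : [0,∞)×[0,R] → ℝ` is a C¹ solution of the reduced Einstein-Λ-scalar field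
equation `Dh = G(h − h̄)`: it is continuous with continuous partial derivatives on the
rectangular domain and satisfies the equation for `0 < r ≤ R`. -/
def IsC1Solution (Λ κ R : ℝ) (h : ℝ → ℝ → ℝ) : Prop :=
  ContinuousOn (fun p : ℝ × ℝ => h p.1 p.2) (Ici 0 ×ˢ Icc 0 R) ∧
  (∀ u ∈ Ici (0:ℝ), ∀ r ∈ Icc (0:ℝ) R,
      DifferentiableWithinAt ℝ (fun u' => h u' r) (Ici 0) u ∧
      DifferentiableWithinAt ℝ (fun r' => h u r') (Icc 0 R) r) ∧
  ContinuousOn (fun p : ℝ × ℝ => pdU h p.1 p.2) (Ici 0 ×ˢ Icc 0 R) ∧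
  ContinuousOn (fun p : ℝ × ℝ => pdR R h p.1 p.2) (Ici 0 ×ˢ Icc 0 R) ∧
  ∀ u ∈ Ici (0:ℝ), ∀ r ∈ Ioc (0:ℝ) R,
    pdU h u r - metricFt Λ κ h u r / 2 * pdR R h u r
      = coefG Λ κ h u r * (h u r - radAvg h u r)

/-!
The equation is a transport equation `∂ᵤ h = (f̃ / 2) ∂ᵣ h + G (h - h̄)` whose coefficients depend
on `h` only through `∂ᵣ h`. Along characteristics the derivative solves
`D(∂ᵣ h) = 2 G ∂ᵣ h + (∂ᵣ G - G / r) (h - h̄)`, where `|h - h̄| ≤ r sup |∂ᵣ h|`. If `∂ᵣ h` is small,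
then `f` is close to `1` and `G / r` is close to `-Λ / 3`, so that the damping dominates the last
term and a maximum principle shows that `sup |∂ᵣ h|` does not grow; nor does `sup |h|`, because
`D h = G h - G h̄` and `|h̄| ≤ sup |h|`. Moreover `f̃ < 0` at `r = R` because `Λ R² > 3`, so that
characteristics leave through `r = R` and no boundary condition is needed.

For existence the coefficients are truncated where `|∂ᵣ h|` is not small, which makes them bounded.
The derivatives of the linearised iterates have uniformly controlled oscillation, and the iterates
converge uniformly because the coefficients are Lipschitz in `h` itself, without a loss of
derivatives; by interpolation the derivatives converge too. The maximum principle shows that the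
truncation is never active. The Lipschitz bound also gives uniqueness.
-/

/-! ### Calculus on an interval -/

/-- The retraction of `ℝ` onto `[a, b]`. Unlike `Set.projIcc` it is real-valued, so that
precomposing with it extends a function on `[a, b]` to a function on `ℝ`. -/
def clamp (a b x : ℝ) : ℝ := max a (min x b)

/-- The mean of `ψ` over the segment from `a` to `b`, by which difference quotients are expressed
as continuous functions of both endpoints (Hadamard's lemma). -/
def segMean (ψ : ℝ → ℝ) (a b : ℝ) : ℝ := ∫ t in (0 : ℝ)..1, ψ (a + t * (b - a))

section Calculus

variable {a b c m x : ℝ} {φ ψ : ℝ → ℝ} {s : Set ℝ}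

@[fun_prop]
theorem continuous_clamp (a b : ℝ) : Continuous (clamp a b) := by
  unfold clamp; fun_prop

theorem clamp_mem (hab : a ≤ b) (x : ℝ) : clamp a b x ∈ Icc a b :=
  ⟨le_max_left _ _, max_le hab (min_le_right _ _)⟩

theorem clamp_of_mem (hx : x ∈ Icc a b) : clamp a b x = x := by
  rw [clamp, min_eq_left hx.2, max_eq_right hx.1]

theorem abs_clamp_sub_clamp_le (a b x y : ℝ) : |clamp a b x - clamp a b y| ≤ |x - y| := by
  refine (abs_max_sub_max_le_max _ _ _ _).trans (max_le (by simp) ?_)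
  exact (abs_min_sub_min_le_max _ _ _ _).trans (by simp)

theorem abs_clamp_sub_clamp_right_le (a b c x : ℝ) : |clamp a b x - clamp a c x| ≤ |b - c| := by
  refine (abs_max_sub_max_le_max _ _ _ _).trans (max_le (by simp) ?_)
  exact (abs_min_sub_min_le_max _ _ _ _).trans (by simp)

theorem segMean_self (ψ : ℝ → ℝ) (a : ℝ) : segMean ψ a a = ψ a := by
  simp [segMean]

@[fun_prop]
theorem continuous_segMean {X : Type*} [TopologicalSpace X] {Ψ : X → ℝ → ℝ} {α β : X → ℝ}
    (hΨ : Continuous fun p : X × ℝ => Ψ p.1 p.2) (hα : Continuous α) (hβ : Continuous β) :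
    Continuous fun x => segMean (Ψ x) (α x) (β x) := by
  unfold segMean; fun_prop

theorem segment_point_mem_uIcc {t : ℝ} (ht : t ∈ Icc (0 : ℝ) 1) : a + t * (b - a) ∈ uIcc a b := by
  rw [← segment_eq_uIcc, segment_eq_image']
  exact ⟨t, ht, rfl⟩

theorem integral_eq_mul_segMean (hψ : Continuous ψ) (a b : ℝ) :
    ∫ s in a..b, ψ s = (b - a) * segMean ψ a b := by
  have := intervalIntegral.integral_comp_mul_deriv (a := (0 : ℝ)) (b := 1)
    (f := fun t => a + t * (b - a)) (f' := fun _ => b - a) (g := ψ)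
    (fun t _ => by simpa using ((hasDerivAt_id t).mul_const (b - a)).const_add a)
    (by fun_prop) hψ
  simp only [Function.comp, zero_mul, add_zero, one_mul, add_sub_cancel,
    intervalIntegral.integral_mul_const] at this
  rw [← this, mul_comm, segMean]

@[fun_prop]
theorem continuous_integral_of_endpoints {X : Type*} [TopologicalSpace X] {Ψ : X → ℝ → ℝ}
    {α β : X → ℝ} (hΨ : Continuous fun p : X × ℝ => Ψ p.1 p.2) (hα : Continuous α)
    (hβ : Continuous β) : Continuous fun x => ∫ s in α x..β x, Ψ x s := by
  have hmean : ∀ x, ∫ s in α x..β x, Ψ x s = (β x - α x) * segMean (Ψ x) (α x) (β x) :=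
    fun x => integral_eq_mul_segMean (by fun_prop) _ _
  simp only [hmean]
  fun_prop

theorem sub_eq_mul_segMean [hs : OrdConnected s] (hφ : ∀ x ∈ s, HasDerivWithinAt φ (ψ x) s x)
    (hψ : Continuous ψ) (ha : a ∈ s) (hb : b ∈ s) : φ b - φ a = (b - a) * segMean ψ a b := by
  have hsub : uIcc a b ⊆ s := hs.uIcc_subset ha hb
  rw [← integral_eq_mul_segMean hψ]
  refine (intervalIntegral.integral_eq_sub_of_hasDeriv_right
    (fun x hx => ((hφ x (hsub hx)).continuousWithinAt.mono hsub)) (fun x hx => ?_)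
    (hψ.intervalIntegrable a b)).symm
  have hxs : s ∈ nhds x := Filter.mem_of_superset (Icc_mem_nhds hx.1 hx.2) hsub
  exact ((hφ x (mem_of_mem_nhds hxs)).hasDerivAt hxs).hasDerivWithinAt

theorem abs_sub_segMean_le (hψ : Continuous ψ) (h : ∀ x ∈ uIcc a b, |c - ψ x| ≤ m) :
    |c - segMean ψ a b| ≤ m := by
  have hsub : c - segMean ψ a b = ∫ t in (0 : ℝ)..1, (c - ψ (a + t * (b - a))) := by
    rw [intervalIntegral.integral_sub (by simp)
      (Continuous.intervalIntegrable (by fun_prop) _ _)]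
    simp [segMean]
  have hbound := intervalIntegral.norm_integral_le_of_norm_le_const (a := (0 : ℝ)) (b := 1)
    (f := fun t => c - ψ (a + t * (b - a))) (C := m) fun t ht => by
      rw [uIoc_of_le zero_le_one] at ht
      exact h _ (segment_point_mem_uIcc (Ioc_subset_Icc_self ht))
  simpa [hsub] using hbound

theorem abs_segMean_le (hψ : Continuous ψ) (h : ∀ x ∈ uIcc a b, |ψ x| ≤ m) :
    |segMean ψ a b| ≤ m := by
  simpa using abs_sub_segMean_le (c := 0) hψ (by simpa using h)

theorem segMean_nonpos (h : ∀ x ∈ uIcc a b, ψ x ≤ 0) : segMean ψ a b ≤ 0 := by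
  have := intervalIntegral.integral_nonneg (μ := MeasureTheory.volume) zero_le_one
    (f := fun t => -ψ (a + t * (b - a)))
    fun t ht => neg_nonneg.2 (h _ (segment_point_mem_uIcc ht))
  simpa [segMean] using this

theorem hasDerivWithinAt_sub_mul {χ K : ℝ → ℝ} {χ' : ℝ} (hχ : HasDerivWithinAt χ χ' s x)
    (hK : ContinuousWithinAt K s x) :
    HasDerivWithinAt (fun y => (χ y - χ x) * K y) (χ' * K x) s x := by
  rw [hasDerivWithinAt_iff_tendsto_slope] at hχ ⊢
  refine (hχ.mul (hK.tendsto.mono_left (nhdsWithin_mono _ sdiff_subset))).congr fun y => ?_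
  simp only [slope_def_field, sub_self, zero_mul, sub_zero]
  ring

theorem hasDerivWithinAt_of_sub_eq_mul {K : ℝ → ℝ} (h : ∀ y ∈ s, φ y - φ x = (y - x) * K y)
    (hK : ContinuousWithinAt K s x) (hx : x ∈ s) : HasDerivWithinAt φ (K x) s x := by
  have hφ : ∀ y ∈ s, φ y = (id y - id x) * K y + φ x := fun y hy => by
    rw [id, id, ← h y hy, sub_add_cancel]
  refine (((hasDerivWithinAt_sub_mul (hasDerivWithinAt_id x s) hK).add_const (φ x)).congr hφ
    (hφ x hx)).congr_deriv (one_mul _)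

theorem hasDerivWithinAt_Icc_of_Ioo (hφ : ContinuousOn φ (Icc a b)) (hψ : Continuous ψ)
    (h : ∀ x ∈ Ioo a b, HasDerivAt φ (ψ x) x) :
    ∀ x ∈ Icc a b, HasDerivWithinAt φ (ψ x) (Icc a b) x := by
  have hFTC : ∀ x ∈ Icc a b, φ x = φ a + ∫ s in a..x, ψ s := fun x hx => by
    rw [intervalIntegral.integral_eq_sub_of_hasDerivAt_of_le hx.1
      (hφ.mono (Icc_subset_Icc_right hx.2))
      (fun t ht => h t ⟨ht.1, ht.2.trans_le hx.2⟩) (hψ.intervalIntegrable _ _)]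
    ring
  intro x hx
  have hd : HasDerivAt (fun x => φ a + ∫ s in a..x, ψ s) (ψ x) x :=
    (hψ.integral_hasStrictDerivAt a x).hasDerivAt.const_add _
  exact hd.hasDerivWithinAt.congr hFTC (hFTC x hx)

theorem hasDerivWithinAt_Ici_of_Icc {φ' : ℝ} (hx : x ∈ Ico a b)
    (h : HasDerivWithinAt φ φ' (Icc a b) x) : HasDerivWithinAt φ φ' (Ici x) x :=
  h.mono_of_mem_nhdsWithin (Icc_mem_nhdsGE_of_mem hx)

theorem hasDerivWithinAt_of_tendstoUniformlyOn {Φ Ψ : ℕ → ℝ → ℝ}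
    (hΦ : ∀ n, ∀ x ∈ Icc a b, HasDerivWithinAt (Φ n) (Ψ n x) (Icc a b) x) (hψ : Continuous ψ)
    (hφlim : TendstoUniformlyOn Φ φ Filter.atTop (Icc a b))
    (hψlim : TendstoUniformlyOn Ψ ψ Filter.atTop (Icc a b)) :
    ∀ x ∈ Icc a b, HasDerivWithinAt φ (ψ x) (Icc a b) x := by
  refine hasDerivWithinAt_Icc_of_Ioo (hφlim.continuousOn (Filter.Frequently.of_forall fun n x hx =>
    (hΦ n x hx).continuousWithinAt)) hψ fun x hx => ?_
  exact hasDerivAt_of_tendstoUniformlyOn isOpen_Ioo (hψlim.mono Ioo_subset_Icc_self)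
    (Filter.Eventually.of_forall fun n x hx =>
      (hΦ n x (Ioo_subset_Icc_self hx)).hasDerivAt (Icc_mem_nhds hx.1 hx.2))
    (fun x hx => hφlim.tendsto_at (Ioo_subset_Icc_self hx)) hx

theorem abs_deriv_le_of_oscillation (hφ : ∀ x ∈ Icc a b, HasDerivWithinAt φ (ψ x) (Icc a b) x)
    (hψ : Continuous ψ) {d δ η : ℝ} (hδ : 0 < δ) (hδab : δ ≤ b - a)
    (hd : ∀ x ∈ Icc a b, |φ x| ≤ d)
    (hη : ∀ x ∈ Icc a b, ∀ y ∈ Icc a b, |x - y| ≤ δ → |ψ x - ψ y| ≤ η) (hx : x ∈ Icc a b) :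
    |ψ x| ≤ η + 4 * d / δ := by
  obtain ⟨y, hy, hyx⟩ : ∃ y ∈ Icc a b, |y - x| = δ / 2 := by
    rcases le_total (x + δ / 2) b with h | h
    · exact ⟨x + δ / 2, ⟨by linarith [hx.1], h⟩, by
        rw [add_sub_cancel_left, abs_of_pos (by positivity)]⟩
    · exact ⟨x - δ / 2, ⟨by linarith, by linarith [hx.2]⟩, by
        rw [sub_sub_cancel_left, abs_neg, abs_of_pos (by positivity)]⟩
  have hosc : |ψ x - segMean ψ x y| ≤ η := abs_sub_segMean_le hψ fun z hz => by
    refine hη x hx z (uIcc_subset_Icc hx hy hz) ?_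
    rw [abs_sub_comm]
    linarith [abs_sub_left_of_mem_uIcc hz]
  have hquot : δ / 2 * |segMean ψ x y| ≤ 2 * d := by
    rw [← hyx, ← abs_mul, ← sub_eq_mul_segMean hφ hψ hx hy]
    exact (abs_sub _ _).trans (by linarith [hd x hx, hd y hy])
  have hmean : |segMean ψ x y| ≤ 4 * d / δ := by
    rw [le_div_iff₀ hδ]
    linarith
  calc |ψ x| ≤ |ψ x - segMean ψ x y| + |segMean ψ x y| := by
        simpa using abs_add_le (ψ x - segMean ψ x y) (segMean ψ x y)
    _ ≤ η + 4 * d / δ := add_le_add hosc hmean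

theorem hasDerivAt_const_mul_exp (M c s : ℝ) :
    HasDerivAt (fun s => M * exp (c * s)) (c * (M * exp (c * s))) s :=
  ((((hasDerivAt_id s).const_mul c).exp).const_mul M).congr_deriv (by simp only [id]; ring)

end Calculus

section LinearComparison

variable {y y' α β B B' : ℝ → ℝ} {t₀ t₁ t : ℝ}

theorem nonneg_of_mul_le_deriv (hα : Continuous α)
    (hy : ∀ s ∈ Icc t₀ t₁, HasDerivWithinAt y (y' s) (Icc t₀ t₁) s)
    (hαy : ∀ s ∈ Icc t₀ t₁, α s * y s ≤ y' s) (h₀ : 0 ≤ y t₀) (ht : t ∈ Icc t₀ t₁) : 0 ≤ y t := by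
  set A : ℝ → ℝ := fun s => ∫ σ in t₀..s, α σ
  have hA : ∀ s, HasDerivAt A (α s) s := fun s => (hα.integral_hasStrictDerivAt t₀ s).hasDerivAt
  have hd : ∀ s ∈ Icc t₀ t₁, HasDerivWithinAt (fun s => y s * exp (-A s))
      ((y' s - α s * y s) * exp (-A s)) (Icc t₀ t₁) s := fun s hs =>
    ((hy s hs).mul (hA s).neg.exp.hasDerivWithinAt).congr_deriv (by
      simp only [Pi.neg_apply]
      ring)
  have hmono : MonotoneOn (fun s => y s * exp (-A s)) (Icc t₀ t₁) :=
    monotoneOn_of_hasDerivWithinAt_nonneg (convex_Icc _ _)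
      (fun s hs => (hd s hs).continuousWithinAt)
      (fun s hs => (hd s (interior_subset hs)).mono interior_subset)
      (fun s hs => mul_nonneg (sub_nonneg.2 (hαy s (interior_subset hs))) (exp_pos _).le)
  have hle : 0 ≤ y t * exp (-A t) := (mul_nonneg h₀ (exp_pos _).le).trans
    (hmono (left_mem_Icc.2 (ht.1.trans ht.2)) ht ht.1)
  exact nonneg_of_mul_nonneg_left hle (exp_pos _)

theorem eq_mul_exp_of_linear_ode (hα : Continuous α)
    (hy : ∀ s ∈ Icc t₀ t₁, HasDerivWithinAt y (α s * y s) (Icc t₀ t₁) s) (ht : t ∈ Icc t₀ t₁) :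
    y t = y t₁ * exp (-∫ σ in t..t₁, α σ) := by
  set A : ℝ → ℝ := fun s => ∫ σ in t₁..s, α σ
  have hA : ∀ s, HasDerivAt A (α s) s := fun s => (hα.integral_hasStrictDerivAt t₁ s).hasDerivAt
  have hd : ∀ s ∈ Icc t₀ t₁,
      HasDerivWithinAt (fun s => y s * exp (-A s)) 0 (Icc t₀ t₁) s := fun s hs =>
    ((hy s hs).mul (hA s).neg.exp.hasDerivWithinAt).congr_deriv (by
      simp only [Pi.neg_apply]
      ring)
  have hconst := constant_of_has_deriv_right_zero (fun s hs => (hd s hs).continuousWithinAt)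
    fun s hs => hasDerivWithinAt_Ici_of_Icc hs (hd s (Ico_subset_Icc_self hs))
  have hend : y t * exp (-A t) = y t₁ := by
    rw [hconst t ht, ← hconst t₁ (right_mem_Icc.2 (ht.1.trans ht.2))]
    simp [A]
  rw [← hend, mul_assoc, ← exp_add, intervalIntegral.integral_symm, neg_neg, neg_add_cancel,
    exp_zero, mul_one]

theorem abs_le_of_linear_ode (hα : Continuous α) (ht : t₀ ≤ t₁)
    (hy : ∀ s ∈ Icc t₀ t₁, HasDerivWithinAt y (α s * y s + β s) (Icc t₀ t₁) s)
    (hB : ∀ s ∈ Icc t₀ t₁, HasDerivWithinAt B (B' s) (Icc t₀ t₁) s)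
    (hβ : ∀ s ∈ Icc t₀ t₁, α s * B s + |β s| ≤ B' s) (h₀ : |y t₀| ≤ B t₀) : |y t₁| ≤ B t₁ := by
  have hright := right_mem_Icc.2 ht
  rw [abs_le'] at h₀ ⊢
  constructor
  · refine sub_nonneg.1 (nonneg_of_mul_le_deriv (y := B - y) hα
      (fun s hs => (hB s hs).sub (hy s hs)) (fun s hs => ?_) (sub_nonneg.2 h₀.1) hright)
    simp only [Pi.sub_apply]
    linarith [hβ s hs, le_abs_self (β s)]
  · refine neg_le_iff_add_nonneg.2 (nonneg_of_mul_le_deriv (y := B + y) hα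
      (fun s hs => (hB s hs).add (hy s hs)) (fun s hs => ?_) (neg_le_iff_add_nonneg.1 h₀.2) hright)
    simp only [Pi.add_apply]
    linarith [hβ s hs, neg_abs_le (β s)]

end LinearComparison

/-! ### Characteristics -/

/-- A transport velocity `F` on `[0, R]` with radial derivative `G`, pointing outwards at both ends
of the interval, so that backward characteristics stay in it, and contracting them. -/
structure IsVelocity (R : ℝ) (F G : ℝ → ℝ → ℝ) : Prop where
  continuous : Continuous ↿F
  continuous_deriv : Continuous ↿G
  deriv : ∀ u, ∀ r ∈ Icc 0 R, HasDerivWithinAt (F u) (G u r) (Icc 0 R) r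
  nonpos : ∀ u, ∀ r ∈ Icc 0 R, G u r ≤ 0
  pos_zero : ∀ u, 0 < F u 0
  neg_right : ∀ u, F u R < 0
  bounded : ∃ C, ∀ u, ∀ r ∈ Icc 0 R, |F u r| ≤ C ∧ |G u r| ≤ C

/-- `χ` is a characteristic `χ' = -F` of the operator `∂ᵤ - F ∂ᵣ` on the time interval `[0, u]`;
it is frozen outside this interval so as to be continuous on `ℝ`. -/
structure IsChar (R : ℝ) (F : ℝ → ℝ → ℝ) (u : ℝ) (χ : ℝ → ℝ) : Prop where
  mem : ∀ s, χ s ∈ Icc 0 R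
  deriv : ∀ s ∈ Icc 0 u, HasDerivWithinAt χ (-F s (χ s)) (Icc 0 u) s
  frozen : ∀ s, χ (clamp 0 u s) = χ s

/-- The backward flow of a velocity: `X u r s` is the position at time `s` of the characteristic
through `r` at time `u`. -/
structure IsFlow (R : ℝ) (F : ℝ → ℝ → ℝ) (X : ℝ → ℝ → ℝ → ℝ) : Prop where
  continuous : Continuous ↿X
  isChar : ∀ u, 0 ≤ u → ∀ r, IsChar R F u (X u r)
  self : ∀ u, 0 ≤ u → ∀ r ∈ Icc 0 R, X u r u = r

section Characteristics

variable {R C u u₁ u₂ r s τ : ℝ} {F G : ℝ → ℝ → ℝ} {χ χ₁ χ₂ : ℝ → ℝ} {X : ℝ → ℝ → ℝ → ℝ}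

theorem IsChar.continuous (hu : 0 ≤ u) (h : IsChar R F u χ) : Continuous χ :=
  (ContinuousOn.comp_continuous (fun s hs => (h.deriv s hs).continuousWithinAt)
    (continuous_clamp 0 u) (clamp_mem hu)).congr h.frozen

theorem IsChar.restrict (h : IsChar R F u χ) (hτ : τ ∈ Icc 0 u) :
    IsChar R F τ (fun s => χ (clamp 0 τ s)) where
  mem s := h.mem _
  deriv s hs := by
    rw [clamp_of_mem hs]
    exact ((h.deriv s ⟨hs.1, hs.2.trans hτ.2⟩).mono (Icc_subset_Icc_right hτ.2)).congr
      (fun x hx => congrArg χ (clamp_of_mem hx)) (congrArg χ (clamp_of_mem hs))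
  frozen s := by rw [clamp_of_mem (clamp_mem hτ.1 s)]

theorem IsChar.sub_eq (hF : IsVelocity R F G) (hu : 0 ≤ u) (h₁ : IsChar R F u χ₁)
    (h₂ : IsChar R F u χ₂) (hs : s ∈ Icc 0 u) :
    χ₁ s - χ₂ s =
      (χ₁ u - χ₂ u) * exp (∫ σ in s..u, segMean (G σ) (χ₂ σ) (χ₁ σ)) := by
  have hχ₁ := h₁.continuous hu
  have hχ₂ := h₂.continuous hu
  have hG := hF.continuous_deriv
  have hode := eq_mul_exp_of_linear_ode (y := fun s => χ₁ s - χ₂ s)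
    (α := fun σ => -segMean (G σ) (χ₂ σ) (χ₁ σ)) (by fun_prop) (fun s hs => ?_) hs
  · simpa only [intervalIntegral.integral_neg, neg_neg] using hode
  · refine ((h₁.deriv s hs).sub (h₂.deriv s hs)).congr_deriv ?_
    linear_combination -sub_eq_mul_segMean (hF.deriv s) (by fun_prop) (h₂.mem s) (h₁.mem s)

theorem IsChar.abs_sub_le (hF : IsVelocity R F G) (hu : 0 ≤ u) (h₁ : IsChar R F u χ₁)
    (h₂ : IsChar R F u χ₂) (s : ℝ) : |χ₁ s - χ₂ s| ≤ |χ₁ u - χ₂ u| := by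
  rw [← h₁.frozen s, ← h₂.frozen s, h₁.sub_eq hF hu h₂ (clamp_mem hu s), abs_mul, abs_exp]
  refine mul_le_of_le_one_right (abs_nonneg _) (exp_le_one_iff.2 ?_)
  have := intervalIntegral.integral_nonneg (μ := MeasureTheory.volume) (clamp_mem hu s).2
    (f := fun σ => -segMean (G σ) (χ₂ σ) (χ₁ σ)) fun σ _ => neg_nonneg.2 <|
      segMean_nonpos fun x hx => hF.nonpos σ x (uIcc_subset_Icc (h₂.mem σ) (h₁.mem σ) hx)
  simpa using this

theorem IsChar.eq (hF : IsVelocity R F G) (hu : 0 ≤ u) (h₁ : IsChar R F u χ₁)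
    (h₂ : IsChar R F u χ₂) (h : χ₁ u = χ₂ u) : χ₁ = χ₂ := by
  funext s
  have := h₁.abs_sub_le hF hu h₂ s
  rw [h, sub_self, abs_zero] at this
  exact sub_eq_zero.1 (abs_nonpos_iff.1 this)

theorem IsChar.abs_sub_le_mul (hC : ∀ u, ∀ r ∈ Icc 0 R, |F u r| ≤ C) (hu : 0 ≤ u)
    (h : IsChar R F u χ) (s s' : ℝ) : |χ s - χ s'| ≤ C * |s - s'| := by
  have hC0 : 0 ≤ C := (abs_nonneg _).trans (hC 0 _ (h.mem 0))
  rw [← h.frozen s, ← h.frozen s']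
  calc |χ (clamp 0 u s) - χ (clamp 0 u s')| ≤ C * |clamp 0 u s - clamp 0 u s'| :=
        (convex_Icc 0 u).norm_image_sub_le_of_norm_hasDerivWithin_le h.deriv
          (fun τ _ => by simpa using hC τ _ (h.mem τ)) (clamp_mem hu s') (clamp_mem hu s)
    _ ≤ C * |s - s'| := mul_le_mul_of_nonneg_left (abs_clamp_sub_clamp_le _ _ _ _) hC0

theorem IsChar.abs_sub_le_of_le (hF : IsVelocity R F G) (hC : ∀ u, ∀ r ∈ Icc 0 R, |F u r| ≤ C)
    (hu₁ : 0 ≤ u₁) (hu : u₁ ≤ u₂) (h₁ : IsChar R F u₁ χ₁) (h₂ : IsChar R F u₂ χ₂) (s : ℝ) :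
    |χ₂ s - χ₁ s| ≤ |χ₂ u₂ - χ₁ u₁| + 2 * C * |u₂ - u₁| := by
  have hu₂ := hu₁.trans hu
  have hC0 : 0 ≤ C := (abs_nonneg _).trans (hC 0 _ (h₁.mem 0))
  have hafter : |χ₂ s - χ₂ (clamp 0 u₁ s)| ≤ C * |u₂ - u₁| := by
    rw [← h₂.frozen s]
    exact (h₂.abs_sub_le_mul hC hu₂ _ _).trans
      (mul_le_mul_of_nonneg_left (abs_clamp_sub_clamp_right_le 0 u₂ u₁ s) hC0)
  have hbefore := (h₂.restrict ⟨hu₁, hu⟩).abs_sub_le hF hu₁ h₁ s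
  simp only [clamp_of_mem (right_mem_Icc.2 hu₁)] at hbefore
  have hend : |χ₂ u₁ - χ₂ u₂| ≤ C * |u₂ - u₁| := by
    simpa only [abs_sub_comm] using h₂.abs_sub_le_mul hC hu₂ u₁ u₂
  linarith [_root_.abs_sub_le (χ₂ s) (χ₂ (clamp 0 u₁ s)) (χ₁ s),
    _root_.abs_sub_le (χ₂ u₁) (χ₂ u₂) (χ₁ u₁)]

theorem IsVelocity.abs_clamp_sub_clamp_le (hR : 0 ≤ R) (hF : IsVelocity R F G)
    (hC : ∀ u, ∀ r ∈ Icc 0 R, |G u r| ≤ C) (t a b : ℝ) :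
    |F t (clamp 0 R a) - F t (clamp 0 R b)| ≤ C * |a - b| := by
  have hG := hF.continuous_deriv
  have ha := clamp_mem hR a
  have hb := clamp_mem hR b
  have hmean := abs_segMean_le (ψ := G t) (by fun_prop) fun x hx =>
    hC t x (uIcc_subset_Icc hb ha hx)
  rw [sub_eq_mul_segMean (hF.deriv t) (by fun_prop) hb ha, abs_mul, mul_comm C]
  exact mul_le_mul (_root_.abs_clamp_sub_clamp_le _ _ _ _) hmean (abs_nonneg _) (abs_nonneg _)

theorem IsVelocity.exists_clamped_ode_solution (hR : 0 ≤ R) (hF : IsVelocity R F G) (hu : 0 ≤ u)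
    (r : ℝ) : ∃ α : ℝ → ℝ, α u = r ∧
      ∀ s ∈ Icc 0 u, HasDerivWithinAt α (-F s (clamp 0 R (α s))) (Icc 0 u) s := by
  have hFc := hF.continuous
  obtain ⟨C, hC⟩ := hF.bounded
  have hC0 : 0 ≤ C := (abs_nonneg _).trans (hC 0 0 (left_mem_Icc.2 hR)).1
  have hPL : IsPicardLindelof (fun t x => -F t (clamp 0 R x)) (tmin := 0) (tmax := u)
      ⟨u, right_mem_Icc.2 hu⟩ r (C * u).toNNReal 0 C.toNNReal C.toNNReal :=
    { lipschitzOnWith := fun t _ => LipschitzOnWith.of_dist_le_mul fun x _ y _ => by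
        rw [dist_neg_neg, Real.dist_eq, Real.dist_eq, coe_toNNReal _ hC0]
        exact hF.abs_clamp_sub_clamp_le hR (fun u r hr => (hC u r hr).2) t x y
      continuousOn := fun x _ => by fun_prop
      norm_le := fun t _ x _ => by
        rw [norm_neg, coe_toNNReal _ hC0]
        exact (hC t _ (clamp_mem hR x)).1
      mul_max_le := by
        rw [coe_toNNReal _ hC0, coe_toNNReal _ (by positivity)]
        simp [hu] }
  exact hPL.exists_eq_forall_mem_Icc_hasDerivWithinAt₀

theorem IsVelocity.mem_Icc_of_clamped_ode (hR : 0 ≤ R) (hF : IsVelocity R F G)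
    {α : ℝ → ℝ} (hαu : α u ∈ Icc 0 R)
    (hα : ∀ s ∈ Icc 0 u, HasDerivWithinAt α (-F s (clamp 0 R (α s))) (Icc 0 u) s) :
    ∀ s ∈ Icc 0 u, α s ∈ Icc 0 R := by
  have hmaps : MapsTo (fun σ => u - σ) (Icc 0 u) (Icc 0 u) := fun x hx =>
    ⟨by linarith [hx.2], by linarith [hx.1]⟩
  have hrev : ∀ σ ∈ Icc 0 u, HasDerivWithinAt (fun σ => α (u - σ))
      (F (u - σ) (clamp 0 R (α (u - σ)))) (Icc 0 u) σ := fun σ hσ =>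
    ((hα (u - σ) (hmaps hσ)).comp σ (((hasDerivAt_id σ).const_sub u).hasDerivWithinAt)
      hmaps).congr_deriv (by ring)
  have hupper : ∀ σ ∈ Icc 0 u, α (u - σ) ≤ R := by
    refine image_le_of_deriv_right_lt_deriv_boundary (B := fun _ => R) (B' := fun _ => 0)
      (fun σ hσ => (hrev σ hσ).continuousWithinAt)
      (fun σ hσ => hasDerivWithinAt_Ici_of_Icc hσ (hrev σ (Ico_subset_Icc_self hσ)))
      (by simpa using hαu.2) (fun _ => hasDerivAt_const _ _) fun σ _ hσR => ?_
    rw [hσR, clamp_of_mem (right_mem_Icc.2 hR)]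
    exact hF.neg_right (u - σ)
  have hlower : ∀ σ ∈ Icc 0 u, -α (u - σ) ≤ 0 := by
    refine image_le_of_deriv_right_lt_deriv_boundary (B := fun _ => 0) (B' := fun _ => 0)
      (fun σ hσ => (hrev σ hσ).neg.continuousWithinAt)
      (fun σ hσ => hasDerivWithinAt_Ici_of_Icc hσ (hrev σ (Ico_subset_Icc_self hσ)).neg)
      (by simpa using hαu.1) (fun _ => hasDerivAt_const _ _) fun σ _ hσ0 => ?_
    rw [show α (u - σ) = 0 from neg_eq_zero.1 hσ0, clamp_of_mem (left_mem_Icc.2 hR)]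
    exact neg_neg_of_pos (hF.pos_zero (u - σ))
  intro s hs
  rw [← sub_sub_cancel u s]
  exact ⟨neg_nonpos.1 (hlower _ (hmaps hs)), hupper _ (hmaps hs)⟩

theorem IsVelocity.exists_isChar (hR : 0 ≤ R) (hF : IsVelocity R F G) (hu : 0 ≤ u)
    (hr : r ∈ Icc 0 R) : ∃ χ, IsChar R F u χ ∧ χ u = r := by
  obtain ⟨α, hαu, hα⟩ := hF.exists_clamped_ode_solution hR hu r
  have hmem := hF.mem_Icc_of_clamped_ode hR (hαu ▸ hr) hα
  refine ⟨fun s => α (clamp 0 u s), ⟨fun s => hmem _ (clamp_mem hu s), fun s hs => ?_, fun s => ?_⟩,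
    (congrArg α (clamp_of_mem (right_mem_Icc.2 hu))).trans hαu⟩
  · have hd := hα s hs
    rw [clamp_of_mem (hmem s hs)] at hd
    rw [clamp_of_mem hs]
    exact hd.congr (fun x hx => congrArg α (clamp_of_mem hx)) (congrArg α (clamp_of_mem hs))
  · rw [clamp_of_mem (clamp_mem hu s)]

theorem IsVelocity.exists_isFlow (hR : 0 ≤ R) (hF : IsVelocity R F G) : ∃ X, IsFlow R F X := by
  obtain ⟨C, hC⟩ := hF.bounded
  replace hC := fun u r hr => (hC u r hr).1
  have hpos : ∀ u : ℝ, 0 ≤ max u 0 := fun u => le_max_right _ _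
  choose X hX hself using fun u r : ℝ => hF.exists_isChar hR (hpos u) (clamp_mem hR r)
  have hbound : ∀ u r s u' r' s', |X u' r' s' - X u r s| ≤
      |clamp 0 R r' - clamp 0 R r| + 2 * C * |max u' 0 - max u 0| + C * |s' - s| := by
    intro u r s u' r' s'
    have hshift : |X u' r' s - X u r s| ≤
        |clamp 0 R r' - clamp 0 R r| + 2 * C * |max u' 0 - max u 0| := by
      rw [← hself u r, ← hself u' r']
      rcases le_total (max u 0) (max u' 0) with h | h
      · exact (hX u r).abs_sub_le_of_le hF hC (hpos u) h (hX u' r') s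
      · simpa only [abs_sub_comm] using (hX u' r').abs_sub_le_of_le hF hC (hpos u') h (hX u r) s
    linarith [abs_sub_le (X u' r' s') (X u' r' s) (X u r s),
      (hX u' r').abs_sub_le_mul hC (hpos u') s' s]
  refine ⟨X, continuous_iff_continuousAt.2 fun ⟨u, r, s⟩ => ?_, fun u hu r => ?_,
    fun u hu r hr => ?_⟩
  · refine tendsto_iff_dist_tendsto_zero.2 (squeeze_zero (fun _ => dist_nonneg)
      (fun p : ℝ × ℝ × ℝ => hbound u r s p.1 p.2.1 p.2.2) ?_)
    refine Continuous.tendsto' (by fun_prop) _ _ (by simp)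
  · simpa only [max_eq_left hu] using hX u r
  · simpa only [max_eq_left hu, clamp_of_mem hr] using hself u r

theorem IsFlow.apply_char (hX : IsFlow R F X) (hF : IsVelocity R F G) (hχ : IsChar R F u χ)
    (hτ : τ ∈ Icc 0 u) (hs : s ∈ Icc 0 τ) : X τ (χ τ) s = χ s := by
  have hrestrict := (hX.isChar τ hτ.1 (χ τ)).eq hF hτ.1 (hχ.restrict hτ) (by
    rw [hX.self τ hτ.1 _ (hχ.mem τ), clamp_of_mem (right_mem_Icc.2 hτ.1)])
  rw [hrestrict]
  exact congrArg χ (clamp_of_mem hs)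

end Characteristics

/-! ### Linear transport equations -/

/-- The solution of `y' = α y + β`, `y 0 = a` at time `s`, by variation of constants. -/
def duhamel (α β : ℝ → ℝ) (a s : ℝ) : ℝ :=
  a * exp (∫ σ in (0 : ℝ)..s, α σ) + ∫ τ in (0 : ℝ)..s, exp (∫ σ in τ..s, α σ) * β τ

/-- The solution of the linear transport equation with damping `G`, source `Y` and initial data
`φ₀`, integrated along the flow `X`. -/
def alongFlow (X : ℝ → ℝ → ℝ → ℝ) (G Y : ℝ → ℝ → ℝ) (φ₀ : ℝ → ℝ) (u r : ℝ) : ℝ :=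
  duhamel (fun s => G s (X u r s)) (fun s => Y s (X u r s)) (φ₀ (X u r 0)) u

/-- `h` is a `C¹` solution of `∂ᵤ h = F ∂ᵣ h + S` on `[0, ∞) × [0, R]` with `∂ᵣ h = v`. -/
structure IsTransport (R : ℝ) (F S h v : ℝ → ℝ → ℝ) : Prop where
  continuous : Continuous ↿h
  continuous_deriv : Continuous ↿v
  deriv_right : ∀ u, 0 ≤ u → ∀ r ∈ Icc 0 R, HasDerivWithinAt (h u) (v u r) (Icc 0 R) r
  deriv_left : ∀ u, 0 ≤ u → ∀ r ∈ Icc 0 R,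
    HasDerivWithinAt (fun u' => h u' r) (F u r * v u r + S u r) (Ici 0) u

/-- `v` solves `∂ᵤ v = F ∂ᵣ v + G v + Y` in the sense of characteristics, for which `v` need not
be differentiable. -/
def IsCharSolution (R : ℝ) (F G Y v : ℝ → ℝ → ℝ) : Prop :=
  ∀ u χ, IsChar R F u χ → ∀ s ∈ Icc 0 u, HasDerivWithinAt (fun s => v s (χ s))
    (G s (χ s) * v s (χ s) + Y s (χ s)) (Icc 0 u) s

section Duhamel

variable {α β α' β' : ℝ → ℝ} {a s : ℝ}

@[fun_prop]
theorem continuous_duhamel {X : Type*} [TopologicalSpace X] {α β : X → ℝ → ℝ} {a s : X → ℝ}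
    (hα : Continuous fun p : X × ℝ => α p.1 p.2) (hβ : Continuous fun p : X × ℝ => β p.1 p.2)
    (ha : Continuous a) (hs : Continuous s) :
    Continuous fun x => duhamel (α x) (β x) (a x) (s x) := by
  unfold duhamel
  fun_prop

theorem duhamel_initial (α β : ℝ → ℝ) (a : ℝ) : duhamel α β a 0 = a := by
  simp [duhamel]

theorem duhamel_zero_left (β : ℝ → ℝ) (a s : ℝ) :
    duhamel (fun _ => 0) β a s = a + ∫ τ in (0 : ℝ)..s, β τ := by
  simp [duhamel]

theorem duhamel_congr (hs : 0 ≤ s) (hα : EqOn α α' (Icc 0 s)) (hβ : EqOn β β' (Icc 0 s)) :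
    duhamel α β a s = duhamel α' β' a s := by
  have hint : ∀ τ ∈ Icc 0 s, ∫ σ in τ..s, α σ = ∫ σ in τ..s, α' σ := fun τ hτ =>
    intervalIntegral.integral_congr
      (hα.mono (uIcc_subset_Icc hτ (right_mem_Icc.2 hs)))
  rw [duhamel, duhamel, hint 0 (left_mem_Icc.2 hs)]
  congr 1
  refine intervalIntegral.integral_congr fun τ hτ => ?_
  rw [uIcc_of_le hs] at hτ
  simp only [hint τ hτ, hβ hτ]

theorem hasDerivAt_duhamel (hα : Continuous α) (hβ : Continuous β) (a s : ℝ) :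
    HasDerivAt (duhamel α β a) (α s * duhamel α β a s + β s) s := by
  set A : ℝ → ℝ := fun s => ∫ σ in (0 : ℝ)..s, α σ
  have hA : ∀ s, HasDerivAt A (α s) s := fun s => (hα.integral_hasStrictDerivAt 0 s).hasDerivAt
  have hAc : Continuous A := by fun_prop
  set I : ℝ → ℝ := fun s => ∫ τ in (0 : ℝ)..s, exp (-A τ) * β τ
  have hI : ∀ s, HasDerivAt I (exp (-A s) * β s) s := fun s =>
    (Continuous.integral_hasStrictDerivAt (by fun_prop) 0 s).hasDerivAt
  have hfactor : duhamel α β a = fun s => exp (A s) * (a + I s) := by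
    funext s
    rw [duhamel, mul_add, mul_comm a, ← intervalIntegral.integral_const_mul]
    congr 2
    funext τ
    rw [← intervalIntegral.integral_interval_sub_left (hα.intervalIntegrable 0 s)
      (hα.intervalIntegrable 0 τ), sub_eq_add_neg, exp_add, mul_assoc]
  rw [hfactor]
  refine ((hA s).exp.mul ((hI s).const_add a)).congr_deriv ?_
  have hexp : exp (A s) * exp (-A s) = 1 := by rw [← exp_add, add_neg_cancel, exp_zero]
  linear_combination β s * hexp

end Duhamel

section Transport

variable {R u r s : ℝ} {F G S Y h v : ℝ → ℝ → ℝ} {X : ℝ → ℝ → ℝ → ℝ} {h₀ v₀ φ₀ χ : ℝ → ℝ}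

theorem alongFlow_char (hF : IsVelocity R F G) (hX : IsFlow R F X) (D : ℝ → ℝ → ℝ)
    (hχ : IsChar R F u χ) (hs : s ∈ Icc 0 u) : alongFlow X D Y φ₀ s (χ s) =
      duhamel (fun σ => D σ (χ σ)) (fun σ => Y σ (χ σ)) (φ₀ (χ 0)) s := by
  rw [alongFlow, hX.apply_char hF hχ hs (left_mem_Icc.2 hs.1)]
  exact duhamel_congr hs.1 (fun σ hσ => by simp only [hX.apply_char hF hχ hs hσ])
    fun σ hσ => by simp only [hX.apply_char hF hχ hs hσ]

theorem continuous_alongFlow (hX : IsFlow R F X) {D : ℝ → ℝ → ℝ} (hD : Continuous ↿D)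
    (hY : Continuous ↿Y) (hφ₀ : Continuous φ₀) : Continuous ↿(alongFlow X D Y φ₀) := by
  have hXc := hX.continuous
  unfold alongFlow
  fun_prop

theorem alongFlow_initial (hX : IsFlow R F X) (D Y : ℝ → ℝ → ℝ) (φ₀ : ℝ → ℝ)
    (hr : r ∈ Icc 0 R) : alongFlow X D Y φ₀ 0 r = φ₀ r := by
  rw [alongFlow, duhamel_initial, hX.self 0 le_rfl r hr]

theorem isCharSolution_alongFlow (hF : IsVelocity R F G) (hX : IsFlow R F X) {D : ℝ → ℝ → ℝ}
    (hD : Continuous ↿D) (hY : Continuous ↿Y) (φ₀ : ℝ → ℝ) :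
    IsCharSolution R F D Y (alongFlow X D Y φ₀) := by
  intro u χ hχ s hs
  have hχc := hχ.continuous (hs.1.trans hs.2)
  have hcomp : EqOn (fun s => alongFlow X D Y φ₀ s (χ s)) _ (Icc 0 u) := fun s hs =>
    alongFlow_char hF hX D hχ hs
  have hd := hasDerivAt_duhamel (α := fun σ => D σ (χ σ)) (β := fun σ => Y σ (χ σ))
    (by fun_prop) (by fun_prop) (φ₀ (χ 0)) s
  exact (hd.hasDerivWithinAt.congr hcomp (hcomp hs)).congr_deriv (by
    rw [← hcomp hs])

theorem hasDerivWithinAt_alongFlow_right (hF : IsVelocity R F G) (hX : IsFlow R F X)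
    (hY : Continuous ↿Y) (hS : Continuous ↿S)
    (hSY : ∀ u, ∀ r ∈ Icc 0 R, HasDerivWithinAt (S u) (Y u r) (Icc 0 R) r)
    (hv₀ : Continuous v₀) (hhv : ∀ r ∈ Icc 0 R, HasDerivWithinAt h₀ (v₀ r) (Icc 0 R) r)
    (hu : 0 ≤ u) (hr : r ∈ Icc 0 R) :
    HasDerivWithinAt (alongFlow X 0 S h₀ u) (alongFlow X G Y v₀ u r) (Icc 0 R) r := by
  have hXc := hX.continuous
  have hGc := hF.continuous_deriv
  have hmem : ∀ r s, X u r s ∈ Icc 0 R := fun r => (hX.isChar u hu r).mem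
  set E : ℝ → ℝ → ℝ := fun r' s => exp (∫ σ in s..u, segMean (G σ) (X u r σ) (X u r' σ)) with hE
  have hEc : Continuous ↿E := by rw [hE]; fun_prop
  have hsub : ∀ r' ∈ Icc 0 R, ∀ s ∈ Icc 0 u, X u r' s - X u r s = (r' - r) * E r' s := by
    intro r' hr' s hs
    rw [(hX.isChar u hu r').sub_eq hF hu (hX.isChar u hu r) hs, hX.self u hu r hr,
      hX.self u hu r' hr']
  have hquot : ∀ r' ∈ Icc 0 R, alongFlow X 0 S h₀ u r' - alongFlow X 0 S h₀ u r =
      (r' - r) * (segMean v₀ (X u r 0) (X u r' 0) * E r' 0 +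
        ∫ s in (0 : ℝ)..u, E r' s * segMean (Y s) (X u r s) (X u r' s)) := by
    intro r' hr'
    have hsource : (∫ s in (0 : ℝ)..u, S s (X u r' s)) - ∫ s in (0 : ℝ)..u, S s (X u r s) =
        (r' - r) * ∫ s in (0 : ℝ)..u, E r' s * segMean (Y s) (X u r s) (X u r' s) := by
      rw [← intervalIntegral.integral_sub (Continuous.intervalIntegrable (by fun_prop) _ _)
        (Continuous.intervalIntegrable (by fun_prop) _ _), ← intervalIntegral.integral_const_mul]
      refine intervalIntegral.integral_congr fun s hs => ?_
      rw [uIcc_of_le hu] at hs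
      rw [sub_eq_mul_segMean (hSY s) (by fun_prop) (hmem r s) (hmem r' s), hsub r' hr' s hs,
        mul_assoc]
    have hinit := sub_eq_mul_segMean hhv hv₀ (hmem r 0) (hmem r' 0)
    rw [hsub r' hr' 0 (left_mem_Icc.2 hu)] at hinit
    simp only [alongFlow, Pi.zero_apply, duhamel_zero_left]
    linear_combination hinit + hsource
  refine (hasDerivWithinAt_of_sub_eq_mul hquot
    (Continuous.continuousWithinAt (by fun_prop)) hr).congr_deriv ?_
  simp only [hE, segMean_self, alongFlow, duhamel]

theorem hasDerivWithinAt_alongFlow_left (hF : IsVelocity R F G) (hX : IsFlow R F X)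
    (hS : Continuous ↿S) (hv : Continuous ↿v) (hhv : ∀ u, 0 ≤ u → ∀ r ∈ Icc 0 R,
      HasDerivWithinAt (alongFlow X 0 S h₀ u) (v u r) (Icc 0 R) r)
    (hu : 0 ≤ u) (hr : r ∈ Icc 0 R) :
    HasDerivWithinAt (fun u' => alongFlow X 0 S h₀ u' r) (F u r * v u r + S u r) (Ici 0) u := by
  have hXc := hX.continuous
  have hFc := hF.continuous
  set h := alongFlow X 0 S h₀ with hh
  set K : ℝ → ℝ → ℝ := fun u₁ u₂ =>
    -segMean (fun s => -F s (X u₂ r s)) u₁ u₂ * segMean (v u₁) r (X u₂ r u₁) +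
      segMean (fun s => S s (X u₂ r s)) u₁ u₂ with hK
  have hsub : ∀ u₁ u₂, 0 ≤ u₁ → u₁ ≤ u₂ → h u₂ r - h u₁ r = (u₂ - u₁) * K u₁ u₂ := by
    intro u₁ u₂ hu₁ hu₁₂
    have hu₂ := hu₁.trans hu₁₂
    have hχ := hX.isChar u₂ hu₂ r
    have hspace := sub_eq_mul_segMean (hhv u₁ hu₁) (by fun_prop) hr (hχ.mem u₁)
    have hchar := sub_eq_mul_segMean hχ.deriv (by fun_prop) ⟨hu₁, hu₁₂⟩ (right_mem_Icc.2 hu₂)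
    have hsource := sub_eq_mul_segMean (ψ := fun s => S s (X u₂ r s))
      (fun s hs => (isCharSolution_alongFlow hF hX (D := 0) continuous_zero hS h₀ u₂ _ hχ s
        hs).congr_deriv (by simp)) (by fun_prop) ⟨hu₁, hu₁₂⟩ (right_mem_Icc.2 hu₂)
    simp only [hX.self u₂ hu₂ r hr, ← hh] at hchar hsource
    rw [hK]
    linear_combination hsource + hspace - segMean (v u₁) r (X u₂ r u₁) * hchar
  refine (hasDerivWithinAt_of_sub_eq_mul (K := fun u' => K (min u' u) (max u' u))
    (fun u' hu' => ?_) (Continuous.continuousWithinAt (by fun_prop)) hu).congr_deriv ?_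
  · rcases le_total u' u with hle | hle
    · rw [min_eq_left hle, max_eq_right hle]
      linear_combination -hsub u' u hu' hle
    · rw [min_eq_right hle, max_eq_left hle]
      exact hsub u u' hu hle
  · simp only [hK, min_self, max_self, segMean_self, hX.self u hu r hr, neg_neg]

theorem exists_isTransport (hR : 0 ≤ R) (hF : IsVelocity R F G) (hS : Continuous ↿S)
    (hY : Continuous ↿Y) (hSY : ∀ u, ∀ r ∈ Icc 0 R, HasDerivWithinAt (S u) (Y u r) (Icc 0 R) r)
    (hh₀ : Continuous h₀) (hv₀ : Continuous v₀)
    (hhv : ∀ r ∈ Icc 0 R, HasDerivWithinAt h₀ (v₀ r) (Icc 0 R) r) :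
    ∃ h v, IsTransport R F S h v ∧ IsCharSolution R F G Y v ∧
      EqOn (h 0) h₀ (Icc 0 R) ∧ EqOn (v 0) v₀ (Icc 0 R) := by
  obtain ⟨X, hX⟩ := hF.exists_isFlow hR
  have hv := continuous_alongFlow hX hF.continuous_deriv hY hv₀
  have hd := fun u hu r hr =>
    hasDerivWithinAt_alongFlow_right hF hX hY hS hSY hv₀ hhv (u := u) hu (r := r) hr
  exact ⟨alongFlow X 0 S h₀, alongFlow X G Y v₀,
    ⟨continuous_alongFlow hX continuous_zero hS hh₀, hv, hd, fun u hu r hr =>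
      hasDerivWithinAt_alongFlow_left hF hX hS hv hd hu hr⟩,
    isCharSolution_alongFlow hF hX hF.continuous_deriv hY v₀,
    fun r hr => alongFlow_initial hX 0 S h₀ hr, fun r hr => alongFlow_initial hX G Y v₀ hr⟩

theorem IsTransport.hasDerivWithinAt_comp (hh : IsTransport R F S h v) {χ' : ℝ}
    (hχ : HasDerivWithinAt χ χ' (Icc 0 u) s) (hmem : ∀ s, χ s ∈ Icc 0 R) (hs : s ∈ Icc 0 u) :
    HasDerivWithinAt (fun s => h s (χ s))
      ((F s (χ s) + χ') * v s (χ s) + S s (χ s)) (Icc 0 u) s := by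
  have hv := hh.continuous_deriv
  have hK : Continuous fun p : ℝ × ℝ => segMean (v p.1) (χ s) p.2 := by fun_prop
  have hspace := hasDerivWithinAt_sub_mul hχ
    (hK.continuousAt.comp_continuousWithinAt (continuousWithinAt_id.prodMk hχ.continuousWithinAt))
  have htime := (hh.deriv_left s hs.1 _ (hmem s)).mono (Icc_subset_Ici_self : Icc 0 u ⊆ Ici 0)
  have hsplit : ∀ s' ∈ Icc 0 u, h s' (χ s') =
      (χ s' - χ s) * segMean (v s') (χ s) (χ s') + h s' (χ s) := fun s' hs' => by
    rw [← sub_eq_mul_segMean (hh.deriv_right s' hs'.1) (by fun_prop) (hmem s) (hmem s'),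
      sub_add_cancel]
  refine ((hspace.add htime).congr hsplit (hsplit s hs)).congr_deriv ?_
  simp only [Function.comp, id, segMean_self]
  ring

theorem IsCharSolution.congr {D D' Y' : ℝ → ℝ → ℝ} (hv : IsCharSolution R F D Y v)
    (h : ∀ s, 0 ≤ s → ∀ r ∈ Icc 0 R, D s r * v s r + Y s r = D' s r * v s r + Y' s r) :
    IsCharSolution R F D' Y' v := fun u χ hχ s hs =>
  (hv u χ hχ s hs).congr_deriv (h s hs.1 _ (hχ.mem s))

theorem IsCharSolution.abs_le (hR : 0 ≤ R) (hF : IsVelocity R F G) {D : ℝ → ℝ → ℝ}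
    (hD : Continuous ↿D) (hv : IsCharSolution R F D Y v) {B B' : ℝ → ℝ} (hu : 0 ≤ u)
    (hB : ∀ s ∈ Icc 0 u, HasDerivWithinAt B (B' s) (Icc 0 u) s)
    (hY : ∀ s ∈ Icc 0 u, ∀ r ∈ Icc 0 R, D s r * B s + |Y s r| ≤ B' s)
    (h₀ : ∀ r ∈ Icc 0 R, |v 0 r| ≤ B 0) (hr : r ∈ Icc 0 R) : |v u r| ≤ B u := by
  obtain ⟨χ, hχ, rfl⟩ := hF.exists_isChar hR hu hr
  have hχc := hχ.continuous hu
  exact abs_le_of_linear_ode (y := fun s => v s (χ s)) (α := fun s => D s (χ s)) (by fun_prop) hu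
    (hv u χ hχ) hB (fun s hs => hY s hs _ (hχ.mem s)) (h₀ _ (hχ.mem 0))

theorem IsTransport.isCharSolution_sub {F' S' h' v' : ℝ → ℝ → ℝ} (hh : IsTransport R F S h v)
    (hh' : IsTransport R F' S' h' v') :
    IsCharSolution R F 0 (fun s r => (F s r - F' s r) * v' s r + (S s r - S' s r))
      (fun s r => h s r - h' s r) := by
  intro u χ hχ s hs
  refine ((hh.hasDerivWithinAt_comp (hχ.deriv s hs) hχ.mem hs).sub
    (hh'.hasDerivWithinAt_comp (hχ.deriv s hs) hχ.mem hs)).congr_deriv ?_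
  simp only [Pi.zero_apply]
  ring

theorem IsTransport.isCharSolution (hh : IsTransport R F S h v) : IsCharSolution R F 0 S h := by
  intro u χ hχ s hs
  refine (hh.hasDerivWithinAt_comp (hχ.deriv s hs) hχ.mem hs).congr_deriv ?_
  simp only [Pi.zero_apply]
  ring

end Transport

/-! ### Uniform limits on compact rectangles -/

/-- The oscillation of `φ` on subintervals of `[0, R]` of length `δ` is at most `η`. -/
def OscLE (R δ η : ℝ) (φ : ℝ → ℝ) : Prop :=
  ∀ a ∈ Icc 0 R, ∀ b ∈ Icc 0 R, |a - b| ≤ δ → |φ a - φ b| ≤ η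

/-- `v` is the derivative of `h` on `[0, R]`, both being continuously extended to `ℝ`. -/
structure IsC1Pair (R : ℝ) (h v : ℝ → ℝ) : Prop where
  continuous : Continuous h
  continuous_deriv : Continuous v
  deriv : ∀ r ∈ Icc 0 R, HasDerivWithinAt h (v r) (Icc 0 R) r

section Limits

variable {R T u ε : ℝ} {Φ : ℕ → ℝ → ℝ → ℝ} {φ : ℝ → ℝ}

theorem IsTransport.isC1Pair {F S h v : ℝ → ℝ → ℝ} (hh : IsTransport R F S h v) (hu : 0 ≤ u) :
    IsC1Pair R (h u) (v u) where
  continuous := by have := hh.continuous; fun_prop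
  continuous_deriv := by have := hh.continuous_deriv; fun_prop
  deriv := hh.deriv_right u hu

theorem exists_oscLE_of_continuous (hφ : Continuous φ) (hε : 0 < ε) :
    ∃ δ > 0, δ ≤ ε ∧ OscLE R δ ε φ := by
  obtain ⟨δ, hδ, hφδ⟩ := Metric.uniformContinuousOn_iff_le.1
    (isCompact_Icc.uniformContinuousOn_of_continuous (hφ.continuousOn (s := Icc 0 R))) ε hε
  exact ⟨min δ ε, lt_min hδ hε, min_le_right _ _, fun a ha b hb hab =>
    hφδ a ha b hb (hab.trans (min_le_left _ _))⟩

theorem exists_abs_le_of_continuous {Φ : ℝ → ℝ → ℝ} (hΦ : Continuous ↿Φ) (R T : ℝ) :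
    ∃ M, 0 ≤ M ∧ ∀ s ∈ Icc 0 T, ∀ r ∈ Icc 0 R, |Φ s r| ≤ M := by
  obtain ⟨M, hM⟩ := (isCompact_Icc.prod isCompact_Icc :
    IsCompact (Icc 0 T ×ˢ Icc 0 R)).exists_bound_of_continuousOn hΦ.continuousOn
  exact ⟨max M 0, le_max_right _ _, fun s hs r hr => (hM (s, r) ⟨hs, hr⟩).trans (le_max_left _ _)⟩

-- `Y` may depend nonlocally on `v`, hence the supremum `N` over the whole interval.
theorem IsCharSolution.abs_le_mul_exp {F G D Y v : ℝ → ℝ → ℝ} (hR : 0 ≤ R)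
    (hF : IsVelocity R F G) (hD : Continuous ↿D) (hvc : Continuous ↿v)
    (hv : IsCharSolution R F D Y v) {C N₀ r : ℝ}
    (hY : ∀ s, 0 ≤ s → s ≤ u → ∀ N, (∀ r ∈ Icc 0 R, |v s r| ≤ N) →
      ∀ r ∈ Icc 0 R, D s r * N + |Y s r| ≤ C * N)
    (h₀ : ∀ r ∈ Icc 0 R, |v 0 r| ≤ N₀) (hu : 0 ≤ u) (hr : r ∈ Icc 0 R) :
    |v u r| ≤ N₀ * exp (C * u) := by
  have hmain : ∀ s ∈ Icc 0 u, ∀ r ∈ Icc 0 R, |v s r| ≤ N₀ * exp (C * s) := by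
    obtain ⟨⟨τ, ρ⟩, ⟨hτ, hρ⟩, hmax⟩ := (isCompact_Icc.prod isCompact_Icc).exists_isMaxOn
      ((nonempty_Icc.2 hu).prod (nonempty_Icc.2 hR))
      (f := fun p => |v p.1 p.2| * exp (-(C * p.1))) (by fun_prop)
    set M := |v τ ρ| * exp (-(C * τ)) with hM
    have hexp : ∀ s, exp (-(C * s)) * exp (C * s) = 1 := fun s => by
      rw [← exp_add, neg_add_cancel, exp_zero]
    have hvM : ∀ s ∈ Icc 0 u, ∀ r ∈ Icc 0 R, |v s r| ≤ M * exp (C * s) := fun s hs r hr =>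
      calc |v s r| = |v s r| * exp (-(C * s)) * exp (C * s) := by rw [mul_assoc, hexp, mul_one]
        _ ≤ M * exp (C * s) := mul_le_mul_of_nonneg_right
          (hmax (⟨hs, hr⟩ : (s, r) ∈ Icc 0 u ×ˢ Icc 0 R)) (exp_pos _).le
    suffices hMN : M ≤ N₀ from fun s hs r hr => (hvM s hs r hr).trans (by gcongr)
    by_contra! hlt
    obtain ⟨K, -, hK⟩ := exists_abs_le_of_continuous hD R u
    have hbarrier := hv.abs_le hR hF hD hτ.1
      (B := fun s => M * exp (C * s) - (M - N₀) * exp (-K * s)) (fun s _ =>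
        ((hasDerivAt_const_mul_exp M C s).sub
          (hasDerivAt_const_mul_exp (M - N₀) (-K) s)).hasDerivWithinAt)
      (fun s hs r hr => ?_) (by simpa using h₀) hρ
    · have heq : M * exp (C * τ) = |v τ ρ| := by rw [hM, mul_assoc, hexp, mul_one]
      have hpos := mul_pos (sub_pos.2 hlt) (exp_pos (-K * τ))
      linarith
    · have hs' : s ∈ Icc 0 u := ⟨hs.1, hs.2.trans hτ.2⟩
      have hforce := hY s hs'.1 hs'.2 _ (hvM s hs') r hr
      have hloss := mul_le_mul_of_nonneg_right (neg_le_of_abs_le (hK s hs' r hr))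
        (mul_nonneg (sub_nonneg.2 hlt.le) (exp_pos (-K * s)).le)
      linarith
  exact hmain u (right_mem_Icc.2 hu) r hr

theorem uniformCauchySeqOn_of_le_geometric {α : Type*} {f : ℕ → α → ℝ} {s : Set α} {K ρ : ℝ}
    (hρ₀ : 0 ≤ ρ) (hρ₁ : ρ < 1) (h : ∀ n, ∀ x ∈ s, |f (n + 1) x - f n x| ≤ K * ρ ^ n) :
    UniformCauchySeqOn f Filter.atTop s := by
  have hdist : ∀ x ∈ s, ∀ n, dist (f n x) (f (n + 1) x) ≤ K * ρ ^ n := fun x hx n => by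
    rw [dist_comm]
    exact h n x hx
  choose! g hg using fun x (hx : x ∈ s) =>
    cauchySeq_tendsto_of_complete (cauchySeq_of_le_geometric ρ K hρ₁ (hdist x hx))
  have hlim : Filter.Tendsto (fun n => K * ρ ^ n / (1 - ρ)) Filter.atTop (nhds 0) := by
    simpa using ((tendsto_pow_atTop_nhds_zero_of_lt_one hρ₀ hρ₁).const_mul K).div_const (1 - ρ)
  refine TendstoUniformlyOn.uniformCauchySeqOn (f := g) (Metric.tendstoUniformlyOn_iff.2 ?_)
  intro ε hε
  filter_upwards [hlim.eventually_lt_const hε] with n hn x hx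
  rw [dist_comm]
  exact (dist_le_of_le_geometric_of_tendsto ρ K hρ₁ (hdist x hx) (hg x hx) n).trans_lt hn

theorem exists_continuous_extension {ψ : ℝ × ℝ → ℝ} (hR : 0 ≤ R)
    (hψ : ContinuousOn ψ (Ici 0 ×ˢ Icc 0 R)) :
    ∃ φ : ℝ → ℝ → ℝ, Continuous ↿φ ∧ EqOn ψ ↿φ (Ici 0 ×ˢ Icc 0 R) := by
  refine ⟨fun u r => ψ (max u 0, clamp 0 R r), hψ.comp_continuous (by fun_prop) fun p =>
    ⟨mem_Ici.2 (le_max_right _ _), clamp_mem hR _⟩, fun p hp => ?_⟩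
  simp only [Function.HasUncurry.uncurry, id, max_eq_left (mem_Ici.1 hp.1), clamp_of_mem hp.2]

theorem exists_continuous_limit (hR : 0 ≤ R) (hΦ : ∀ n, Continuous ↿(Φ n))
    (h : ∀ T, UniformCauchySeqOn (fun n => ↿(Φ n)) Filter.atTop (Icc 0 T ×ˢ Icc 0 R)) :
    ∃ φ : ℝ → ℝ → ℝ, Continuous ↿φ ∧
      ∀ T, TendstoUniformlyOn (fun n => ↿(Φ n)) ↿φ Filter.atTop (Icc 0 T ×ˢ Icc 0 R) := by
  have hmem : ∀ p ∈ Ici (0 : ℝ) ×ˢ Icc 0 R, p ∈ Icc 0 p.1 ×ˢ Icc 0 R := fun p hp =>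
    ⟨⟨hp.1, le_rfl⟩, hp.2⟩
  choose! ψ hψ using fun p (hp : p ∈ Ici (0 : ℝ) ×ˢ Icc 0 R) =>
    cauchySeq_tendsto_of_complete ((h p.1).cauchySeq (hmem p hp))
  have hψu : ∀ T, TendstoUniformlyOn (fun n => ↿(Φ n)) ψ Filter.atTop (Icc 0 T ×ˢ Icc 0 R) :=
    fun T => (h T).tendstoUniformlyOn_of_tendsto fun p hp => hψ p ⟨hp.1.1, hp.2⟩
  have hψc : ContinuousOn ψ (Ici (0 : ℝ) ×ˢ Icc 0 R) := by
    intro p hp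
    have hcont : ContinuousOn ψ (Icc 0 (p.1 + 1) ×ˢ Icc 0 R) :=
      (hψu (p.1 + 1)).continuousOn (Filter.Frequently.of_forall fun n => (hΦ n).continuousOn)
    refine (hcont p ⟨⟨hp.1, by simp⟩, hp.2⟩).mono_of_mem_nhdsWithin ?_
    filter_upwards [self_mem_nhdsWithin, mem_nhdsWithin_of_mem_nhds
      ((isOpen_lt continuous_fst continuous_const).mem_nhds (lt_add_one p.1))] with q hq hqp
    exact ⟨⟨hq.1, le_of_lt hqp⟩, hq.2⟩
  obtain ⟨φ, hφ, heq⟩ := exists_continuous_extension hR hψc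
  exact ⟨φ, hφ, fun T => (hψu T).congr_right fun p hp => heq ⟨hp.1.1, hp.2⟩⟩

-- Interpolation: derivatives of equal oscillation converge as soon as the functions do.
theorem uniformCauchySeqOn_deriv {H V : ℕ → ℝ → ℝ → ℝ} (hR : 0 < R)
    (hHV : ∀ n, ∀ u ∈ Icc 0 T, IsC1Pair R (H n u) (V n u))
    (hosc : ∀ ε > 0, ∃ δ > 0, ∀ n, ∀ u ∈ Icc 0 T, OscLE R δ ε (V n u))
    (hH : UniformCauchySeqOn (fun n => ↿(H n)) Filter.atTop (Icc 0 T ×ˢ Icc 0 R)) :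
    UniformCauchySeqOn (fun n => ↿(V n)) Filter.atTop (Icc 0 T ×ˢ Icc 0 R) := by
  rw [Metric.uniformCauchySeqOn_iff] at hH ⊢
  intro ε hε
  obtain ⟨δ, hδ, hVδ⟩ := hosc (ε / 8) (by positivity)
  have hδR : 0 < min δ R := lt_min hδ hR
  obtain ⟨N, hN⟩ := hH (ε * min δ R / 16) (by positivity)
  refine ⟨N, fun m hm n hn p hp => ?_⟩
  have hpm := hHV m p.1 hp.1
  have hpn := hHV n p.1 hp.1
  have hbound := abs_deriv_le_of_oscillation (φ := fun r => H m p.1 r - H n p.1 r)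
    (ψ := fun r => V m p.1 r - V n p.1 r) (d := ε * min δ R / 16) (η := ε / 4)
    (fun r hr => (hpm.deriv r hr).sub (hpn.deriv r hr))
    (hpm.continuous_deriv.sub hpn.continuous_deriv) hδR (by simp)
    (fun r hr => (hN m hm n hn (p.1, r) ⟨hp.1, hr⟩).le) (fun a ha b hb hab => ?_) hp.2
  · have hvalue : ε / 4 + 4 * (ε * min δ R / 16) / min δ R = ε / 2 := by
      field_simp
      ring
    exact hbound.trans_lt (by linarith)
  · have hδab := hab.trans (min_le_left _ _)
    have hm := hVδ m p.1 hp.1 a ha b hb hδab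
    have hn := hVδ n p.1 hp.1 a ha b hb hδab
    rw [sub_sub_sub_comm]
    exact (abs_sub _ _).trans (by linarith)

end Limits

/-! ### Quasilinear transport equations -/

/-- `Φ` maps functions bounded by `V` and of small oscillation to functions of comparably small
oscillation, uniformly over such functions. -/
def PreservesOsc (R V : ℝ) (Φ : (ℝ → ℝ) → ℝ → ℝ) : Prop :=
  ∃ C, 0 ≤ C ∧ ∀ φ, Continuous φ → (∀ r ∈ Icc 0 R, |φ r| ≤ V) → ∀ δ η, 0 < δ → δ ≤ η →
    OscLE R δ η φ → OscLE R δ (C * η) (Φ φ)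

/-- On functions bounded by `V`, the operator `Φ` is Lipschitz with respect to the uniform norm of
antiderivatives, which is weaker than that of the functions themselves. -/
def AntiderivLipschitz (R V : ℝ) (Φ : (ℝ → ℝ) → ℝ → ℝ) : Prop :=
  ∃ C, 0 ≤ C ∧ ∀ h₁ φ₁ h₂ φ₂ d, IsC1Pair R h₁ φ₁ → IsC1Pair R h₂ φ₂ →
    (∀ r ∈ Icc 0 R, |φ₁ r| ≤ V) → (∀ r ∈ Icc 0 R, |φ₂ r| ≤ V) →
    (∀ r ∈ Icc 0 R, |h₁ r - h₂ r| ≤ d) → ∀ r ∈ Icc 0 R, |Φ φ₁ r - Φ φ₂ r| ≤ C * d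

theorem AntiderivLipschitz.exists_forcing_le {R V : ℝ} {Φ Ψ : (ℝ → ℝ) → ℝ → ℝ}
    (hΦ : AntiderivLipschitz R V Φ) (hΨ : AntiderivLipschitz R V Ψ) : ∃ C, 0 ≤ C ∧
      ∀ h₁ φ₁ h₂ φ₂ d w, IsC1Pair R h₁ φ₁ → IsC1Pair R h₂ φ₂ →
        (∀ r ∈ Icc 0 R, |φ₁ r| ≤ V) → (∀ r ∈ Icc 0 R, |φ₂ r| ≤ V) →
        (∀ r ∈ Icc 0 R, |h₁ r - h₂ r| ≤ d) → |w| ≤ V → ∀ r ∈ Icc 0 R,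
          |(Φ φ₁ r - Φ φ₂ r) * w + (Ψ φ₁ r - Ψ φ₂ r)| ≤ C * d := by
  obtain ⟨C₁, hC₁, hΦ⟩ := hΦ
  obtain ⟨C₂, hC₂, hΨ⟩ := hΨ
  refine ⟨C₁ * |V| + C₂, by positivity,
    fun h₁ φ₁ h₂ φ₂ d w hp₁ hp₂ hφ₁ hφ₂ hd hw r hr => ?_⟩
  have hd₀ : 0 ≤ d := (abs_nonneg _).trans (hd r hr)
  calc _ ≤ |Φ φ₁ r - Φ φ₂ r| * |w| + |Ψ φ₁ r - Ψ φ₂ r| := by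
        rw [← abs_mul]
        exact abs_add_le _ _
    _ ≤ C₁ * d * |V| + C₂ * d := add_le_add
        (mul_le_mul (hΦ h₁ φ₁ h₂ φ₂ d hp₁ hp₂ hφ₁ hφ₂ hd r hr) (hw.trans (le_abs_self V))
          (abs_nonneg _) (by positivity))
        (hΨ h₁ φ₁ h₂ φ₂ d hp₁ hp₂ hφ₁ hφ₂ hd r hr)
    _ = (C₁ * |V| + C₂) * d := by ring

/-- The coefficients of a quasilinear transport equation
`∂ᵤ h = velocity[∂ᵣ h] ∂ᵣ h + source[∂ᵣ h]`, which may depend nonlocally on `∂ᵣ h`; `damping` and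
`sourceDeriv` are the radial derivatives of `velocity` and `source`. -/
structure TransportCoeffs (R : ℝ) where
  velocity : (ℝ → ℝ) → ℝ → ℝ
  damping : (ℝ → ℝ) → ℝ → ℝ
  source : (ℝ → ℝ) → ℝ → ℝ
  sourceDeriv : (ℝ → ℝ) → ℝ → ℝ
  isVelocity : ∀ {v : ℝ → ℝ → ℝ}, Continuous ↿v →
    IsVelocity R (fun u => velocity (v u)) (fun u => damping (v u))
  continuous_source : ∀ {v : ℝ → ℝ → ℝ}, Continuous ↿v → Continuous ↿(fun u => source (v u))
  continuous_sourceDeriv : ∀ {v : ℝ → ℝ → ℝ}, Continuous ↿v →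
    Continuous ↿(fun u => sourceDeriv (v u))
  hasDerivWithinAt_source : ∀ {φ : ℝ → ℝ}, Continuous φ → ∀ r ∈ Icc 0 R,
    HasDerivWithinAt (source φ) (sourceDeriv φ r) (Icc 0 R) r
  sourceDeriv_le : ∃ C, 0 ≤ C ∧ ∀ φ N, Continuous φ → (∀ r ∈ Icc 0 R, |φ r| ≤ N) →
    ∀ r ∈ Icc 0 R, |sourceDeriv φ r| ≤ C * N
  preservesOsc_damping : ∀ V, PreservesOsc R V damping
  preservesOsc_sourceDeriv : ∀ V, PreservesOsc R V sourceDeriv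
  lipschitz_velocity : ∀ V, AntiderivLipschitz R V velocity
  lipschitz_source : ∀ V, AntiderivLipschitz R V source

namespace TransportCoeffs

/-- One step of the iteration scheme: `(h', v')` solves the linear equation with coefficients
frozen at `v`. A fixed point `v' = v` is a solution of the quasilinear equation. -/
structure IsStep {R : ℝ} (c : TransportCoeffs R) (h₀ v₀ : ℝ → ℝ) (v h' v' : ℝ → ℝ → ℝ) :
    Prop where
  isTransport : IsTransport R (fun u => c.velocity (v u)) (fun u => c.source (v u)) h' v'
  isCharSolution : IsCharSolution R (fun u => c.velocity (v u)) (fun u => c.damping (v u))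
    (fun u => c.sourceDeriv (v u)) v'
  init : EqOn (h' 0) h₀ (Icc 0 R)
  init_deriv : EqOn (v' 0) v₀ (Icc 0 R)

/-- The iterates of `IsStep`, starting from the stationary extension of the data. -/
structure IsIteration {R : ℝ} (c : TransportCoeffs R) (h₀ v₀ : ℝ → ℝ) (H V : ℕ → ℝ → ℝ → ℝ) :
    Prop where
  zero_left : H 0 = fun _ => h₀
  zero_right : V 0 = fun _ => v₀
  step : ∀ n, c.IsStep h₀ v₀ (V n) (H (n + 1)) (V (n + 1))

section Quasilinear

variable {R T V u : ℝ} {c : TransportCoeffs R} {h₀ v₀ : ℝ → ℝ} {v h' v' : ℝ → ℝ → ℝ}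

theorem exists_isStep (c : TransportCoeffs R) (hR : 0 ≤ R) (hd : IsC1Pair R h₀ v₀)
    (hv : Continuous ↿v) : ∃ h' v', c.IsStep h₀ v₀ v h' v' := by
  obtain ⟨h', v', htransport, hchar, hinit, hinit'⟩ := exists_isTransport hR (c.isVelocity hv)
    (c.continuous_source hv) (c.continuous_sourceDeriv hv)
    (fun u r hr => c.hasDerivWithinAt_source (by fun_prop) r hr) hd.continuous hd.continuous_deriv
    hd.deriv
  exact ⟨h', v', htransport, hchar, hinit, hinit'⟩

theorem IsStep.abs_deriv_le (h : c.IsStep h₀ v₀ v h' v') (hR : 0 ≤ R) (hv : Continuous ↿v)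
    {x C : ℝ} (hC : ∀ φ N, Continuous φ → (∀ r ∈ Icc 0 R, |φ r| ≤ N) →
      ∀ r ∈ Icc 0 R, |c.sourceDeriv φ r| ≤ C * N)
    (hx : ∀ r ∈ Icc 0 R, |v₀ r| ≤ x)
    (hvx : ∀ u, 0 ≤ u → ∀ r ∈ Icc 0 R, |v u r| ≤ x * exp (C * u)) (hu : 0 ≤ u) :
    ∀ r ∈ Icc 0 R, |v' u r| ≤ x * exp (C * u) := by
  have hF := c.isVelocity hv
  have hx₀ : 0 ≤ x := (abs_nonneg _).trans (hx 0 (left_mem_Icc.2 hR))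
  refine fun r hr => h.isCharSolution.abs_le hR hF hF.continuous_deriv hu
    (fun s _ => (hasDerivAt_const_mul_exp x C s).hasDerivWithinAt) (fun s hs r hr => ?_)
    (fun r hr => ?_) hr
  · have hdamping := mul_nonpos_of_nonpos_of_nonneg (hF.nonpos s r hr)
      (by positivity : 0 ≤ x * exp (C * s))
    have hsource := hC (v s) _ (by fun_prop) (hvx s hs.1) r hr
    linarith
  · simpa [h.init_deriv hr] using hx r hr

-- This expression governs the difference of a solution along two characteristics.
theorem exists_preservesOsc (c : TransportCoeffs R) (V : ℝ) : ∃ C, 0 ≤ C ∧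
    ∀ φ, Continuous φ → (∀ r ∈ Icc 0 R, |φ r| ≤ V) → ∀ δ η, 0 < δ → δ ≤ η → OscLE R δ η φ →
      ∀ w, |w| ≤ V → ∀ a ∈ Icc 0 R, ∀ b ∈ Icc 0 R, |a - b| ≤ δ →
        |(c.damping φ a - c.damping φ b) * w + (c.sourceDeriv φ a - c.sourceDeriv φ b)| ≤
          C * η := by
  obtain ⟨C₁, hC₁, hdamping⟩ := c.preservesOsc_damping V
  obtain ⟨C₂, hC₂, hsource⟩ := c.preservesOsc_sourceDeriv V
  refine ⟨C₁ * |V| + C₂, by positivity,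
    fun φ hφ hφV δ η hδ hδη hosc w hw a ha b hb hab => ?_⟩
  have hη := hδ.le.trans hδη
  calc _ ≤ |c.damping φ a - c.damping φ b| * |w| + |c.sourceDeriv φ a - c.sourceDeriv φ b| := by
        rw [← abs_mul]
        exact abs_add_le _ _
    _ ≤ C₁ * η * |V| + C₂ * η := add_le_add
        (mul_le_mul (hdamping φ hφ hφV δ η hδ hδη hosc a ha b hb hab) (hw.trans (le_abs_self V))
          (abs_nonneg _) (by positivity))
        (hsource φ hφ hφV δ η hδ hδη hosc a ha b hb hab)
    _ = (C₁ * |V| + C₂) * η := by ring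

theorem IsStep.oscLE (h : c.IsStep h₀ v₀ v h' v') (hR : 0 ≤ R) (hv : Continuous ↿v) {C δ ε : ℝ}
    (hC₀ : 0 ≤ C)
    (hC : ∀ φ, Continuous φ → (∀ r ∈ Icc 0 R, |φ r| ≤ V) → ∀ δ η, 0 < δ → δ ≤ η →
      OscLE R δ η φ → ∀ w, |w| ≤ V → ∀ a ∈ Icc 0 R, ∀ b ∈ Icc 0 R, |a - b| ≤ δ →
        |(c.damping φ a - c.damping φ b) * w + (c.sourceDeriv φ a - c.sourceDeriv φ b)| ≤ C * η)
    (hδ : 0 < δ) (hδε : δ ≤ ε) (hv₀ : OscLE R δ ε v₀)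
    (hvV : ∀ u ∈ Icc 0 T, ∀ r ∈ Icc 0 R, |v u r| ≤ V)
    (hvV' : ∀ u ∈ Icc 0 T, ∀ r ∈ Icc 0 R, |v' u r| ≤ V)
    (hosc : ∀ u ∈ Icc 0 T, OscLE R δ (ε * exp (C * u)) (v u)) :
    ∀ u ∈ Icc 0 T, OscLE R δ (ε * exp (C * u)) (v' u) := by
  intro u hu a ha b hb hab
  have hF := c.isVelocity hv
  have hG := hF.continuous_deriv
  obtain ⟨χ, hχ, rfl⟩ := hF.exists_isChar hR hu.1 ha
  obtain ⟨ξ, hξ, rfl⟩ := hF.exists_isChar hR hu.1 hb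
  have hclose : ∀ s, |χ s - ξ s| ≤ δ := fun s => (hχ.abs_sub_le hF hu.1 hξ s).trans hab
  have hχc := hχ.continuous hu.1
  refine abs_le_of_linear_ode (y := fun s => v' s (χ s) - v' s (ξ s))
    (α := fun s => c.damping (v s) (χ s))
    (β := fun s => (c.damping (v s) (χ s) - c.damping (v s) (ξ s)) * v' s (ξ s) +
      (c.sourceDeriv (v s) (χ s) - c.sourceDeriv (v s) (ξ s)))
    (hG.comp (continuous_id.prodMk hχc)) hu.1
    (fun s hs => ((h.isCharSolution u χ hχ s hs).sub (h.isCharSolution u ξ hξ s hs)).congr_deriv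
      (by ring))
    (fun s _ => (hasDerivAt_const_mul_exp ε C s).hasDerivWithinAt) (fun s hs => ?_) ?_
  · have hsT : s ∈ Icc 0 T := ⟨hs.1, hs.2.trans hu.2⟩
    have hδη : δ ≤ ε * exp (C * s) := hδε.trans (le_mul_of_one_le_right (hδ.le.trans hδε)
      (one_le_exp (mul_nonneg hC₀ hs.1)))
    have hforce := hC (v s) (by fun_prop) (hvV s hsT) δ _ hδ hδη (hosc s hsT) _
      (hvV' s hsT _ (hξ.mem s)) _ (hχ.mem s) _ (hξ.mem s) (hclose s)
    have hdamping := mul_nonpos_of_nonpos_of_nonneg (hF.nonpos s _ (hχ.mem s))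
      (hδ.le.trans hδη)
    linarith
  · simpa [h.init_deriv (hχ.mem 0), h.init_deriv (hξ.mem 0)] using
      hv₀ _ (hχ.mem 0) _ (hξ.mem 0) (hclose 0)

-- `B` majorises the time integral of the difference of the frozen coefficients.
theorem IsStep.abs_sub_le {v₂ h₂' v₂' : ℝ → ℝ → ℝ} (h : c.IsStep h₀ v₀ v h' v')
    (h₂ : c.IsStep h₀ v₀ v₂ h₂' v₂') (hR : 0 ≤ R) (hv : Continuous ↿v) {B B' : ℝ → ℝ} (hu : 0 ≤ u)
    (hB : ∀ s, HasDerivAt B (B' s) s) (hB₀ : 0 ≤ B 0)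
    (hforce : ∀ s ∈ Icc 0 u, ∀ r ∈ Icc 0 R,
      |(c.velocity (v s) r - c.velocity (v₂ s) r) * v₂' s r +
        (c.source (v s) r - c.source (v₂ s) r)| ≤ B' s) :
    ∀ r ∈ Icc 0 R, |h' u r - h₂' u r| ≤ B u := fun r hr =>
  (h.isTransport.isCharSolution_sub h₂.isTransport).abs_le hR (c.isVelocity hv) (D := 0)
    continuous_zero hu (fun s _ => (hB s).hasDerivWithinAt)
    (fun s hs r hr => by simpa using hforce s hs r hr)
    (fun r hr => by simpa [h.init hr, h₂.init hr] using hB₀) hr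

end Quasilinear

section Iteration

variable {R T u : ℝ} {c : TransportCoeffs R} {h₀ v₀ : ℝ → ℝ} {H V : ℕ → ℝ → ℝ → ℝ}
  {h v : ℝ → ℝ → ℝ}

theorem exists_isIteration (c : TransportCoeffs R) (hR : 0 ≤ R) (hd : IsC1Pair R h₀ v₀) :
    ∃ H V, c.IsIteration h₀ v₀ H V := by
  have hv₀ := hd.continuous_deriv
  choose! h' v' hstep using fun v (hv : Continuous ↿v) => exists_isStep c hR hd hv
  have hcont : ∀ n, Continuous ↿(v'^[n] fun _ => v₀) := by
    intro n
    induction n with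
    | zero => exact hv₀.comp continuous_snd
    | succ n ih =>
      rw [Function.iterate_succ_apply']
      exact (hstep _ ih).isTransport.continuous_deriv
  refine ⟨fun n => n.casesOn (fun _ => h₀) fun n => h' (v'^[n] fun _ => v₀),
    fun n => v'^[n] fun _ => v₀, rfl, rfl, fun n => ?_⟩
  simp only [Function.iterate_succ_apply']
  exact hstep _ (hcont n)

theorem IsIteration.continuous (hI : c.IsIteration h₀ v₀ H V) (hd : IsC1Pair R h₀ v₀) (n : ℕ) :
    Continuous ↿(H n) := by
  cases n with
  | zero => rw [hI.zero_left]; exact hd.continuous.comp continuous_snd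
  | succ n => exact (hI.step n).isTransport.continuous

theorem IsIteration.continuous_deriv (hI : c.IsIteration h₀ v₀ H V) (hd : IsC1Pair R h₀ v₀)
    (n : ℕ) : Continuous ↿(V n) := by
  cases n with
  | zero => rw [hI.zero_right]; exact hd.continuous_deriv.comp continuous_snd
  | succ n => exact (hI.step n).isTransport.continuous_deriv

theorem IsIteration.isC1Pair (hI : c.IsIteration h₀ v₀ H V) (hd : IsC1Pair R h₀ v₀) (n : ℕ)
    (hu : 0 ≤ u) : IsC1Pair R (H n u) (V n u) := by
  cases n with
  | zero => rw [hI.zero_left, hI.zero_right]; exact hd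
  | succ n => exact (hI.step n).isTransport.isC1Pair hu

theorem IsIteration.exists_abs_deriv_le (hI : c.IsIteration h₀ v₀ H V) (hR : 0 ≤ R)
    (hd : IsC1Pair R h₀ v₀) (T : ℝ) :
    ∃ W, ∀ n, ∀ u ∈ Icc 0 T, ∀ r ∈ Icc 0 R, |V n u r| ≤ W := by
  obtain ⟨C, hC₀, hC⟩ := c.sourceDeriv_le
  obtain ⟨x, hx⟩ := isCompact_Icc.exists_bound_of_continuousOn
    (hd.continuous_deriv.continuousOn (s := Icc 0 R))
  have hx₀ : 0 ≤ x := (norm_nonneg _).trans (hx 0 (left_mem_Icc.2 hR))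
  have hgrowth : ∀ n, ∀ u, 0 ≤ u → ∀ r ∈ Icc 0 R, |V n u r| ≤ x * exp (C * u) := by
    intro n
    induction n with
    | zero =>
      intro u hu r hr
      rw [hI.zero_right]
      exact (hx r hr).trans (le_mul_of_one_le_right hx₀ (one_le_exp (by positivity)))
    | succ n ih =>
      exact fun u hu => (hI.step n).abs_deriv_le hR (hI.continuous_deriv hd n) hC hx ih hu
  refine ⟨x * exp (C * T), fun n u hu r hr => (hgrowth n u hu.1 r hr).trans ?_⟩
  gcongr
  exact hu.2

theorem IsIteration.exists_oscLE_deriv (hI : c.IsIteration h₀ v₀ H V) (hR : 0 ≤ R)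
    (hd : IsC1Pair R h₀ v₀) (T ε : ℝ) (hε : 0 < ε) :
    ∃ δ > 0, ∀ n, ∀ u ∈ Icc 0 T, OscLE R δ ε (V n u) := by
  obtain ⟨W, hW⟩ := hI.exists_abs_deriv_le hR hd T
  obtain ⟨C, hC₀, hC⟩ := c.exists_preservesOsc W
  obtain ⟨δ, hδ, hδε, hosc₀⟩ := exists_oscLE_of_continuous (R := R) hd.continuous_deriv
    (by positivity : 0 < ε * exp (-(C * T)))
  have hgrowth : ∀ n, ∀ u ∈ Icc 0 T,
      OscLE R δ (ε * exp (-(C * T)) * exp (C * u)) (V n u) := by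
    intro n
    induction n with
    | zero =>
      intro u hu a ha b hb hab
      rw [hI.zero_right]
      exact (hosc₀ a ha b hb hab).trans (le_mul_of_one_le_right (by positivity)
        (one_le_exp (mul_nonneg hC₀ hu.1)))
    | succ n ih =>
      exact (hI.step n).oscLE hR (hI.continuous_deriv hd n) hC₀ hC hδ hδε hosc₀ (hW n)
        (hW (n + 1)) ih
  refine ⟨δ, hδ, fun n u hu a ha b hb hab => (hgrowth n u hu a ha b hb hab).trans ?_⟩
  rw [mul_assoc, ← exp_add]
  refine mul_le_of_le_one_right hε.le (exp_le_one_iff.2 ?_)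
  linarith [mul_le_mul_of_nonneg_left hu.2 hC₀]

-- In the norm weighted by `exp (-2 C u)` the scheme is a contraction with factor `1 / 2`.
theorem IsIteration.exists_abs_sub_le_geometric (hI : c.IsIteration h₀ v₀ H V) (hR : 0 ≤ R)
    (hd : IsC1Pair R h₀ v₀) (T : ℝ) :
    ∃ K, ∀ n, ∀ u ∈ Icc 0 T, ∀ r ∈ Icc 0 R, |H (n + 1) u r - H n u r| ≤ K * (1 / 2) ^ n := by
  obtain ⟨W, hW⟩ := hI.exists_abs_deriv_le hR hd T
  obtain ⟨C, hC₀, hC⟩ := (c.lipschitz_velocity W).exists_forcing_le (c.lipschitz_source W)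
  obtain ⟨M, hM₀, hM⟩ := exists_abs_le_of_continuous (Φ := fun u r => H 1 u r - H 0 u r)
    ((hI.continuous hd 1).sub (hI.continuous hd 0)) R T
  have hgeom : ∀ n, ∀ u ∈ Icc 0 T, ∀ r ∈ Icc 0 R,
      |H (n + 1) u r - H n u r| ≤ M * (1 / 2) ^ n * exp (2 * C * u) := by
    intro n
    induction n with
    | zero =>
      intro u hu r hr
      rw [pow_zero, mul_one]
      exact (hM u hu r hr).trans (le_mul_of_one_le_right hM₀
        (one_le_exp (mul_nonneg (by positivity) hu.1)))
    | succ n ih =>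
      refine fun u hu => (hI.step (n + 1)).abs_sub_le (hI.step n) hR
        (hI.continuous_deriv hd (n + 1)) hu.1 (hasDerivAt_const_mul_exp _ (2 * C)) (by positivity)
        fun s hs r hr => ?_
      have hsT : s ∈ Icc 0 T := ⟨hs.1, hs.2.trans hu.2⟩
      refine (hC _ _ _ _ _ _ (hI.isC1Pair hd _ hs.1) (hI.isC1Pair hd _ hs.1) (hW _ s hsT)
        (hW _ s hsT) (ih s hsT) (hW _ s hsT r hr) r hr).trans_eq ?_
      ring
  refine ⟨M * exp (2 * C * T), fun n u hu r hr => (hgeom n u hu r hr).trans ?_⟩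
  rw [mul_right_comm]
  gcongr
  exact hu.2

theorem IsIteration.uniformCauchySeqOn (hI : c.IsIteration h₀ v₀ H V) (hR : 0 ≤ R)
    (hd : IsC1Pair R h₀ v₀) (T : ℝ) :
    UniformCauchySeqOn (fun n => ↿(H n)) Filter.atTop (Icc 0 T ×ˢ Icc 0 R) := by
  obtain ⟨K, hK⟩ := hI.exists_abs_sub_le_geometric hR hd T
  exact uniformCauchySeqOn_of_le_geometric (by norm_num) (by norm_num)
    fun n p hp => hK n p.1 hp.1 p.2 hp.2

theorem IsIteration.exists_limit (hI : c.IsIteration h₀ v₀ H V) (hR : 0 < R)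
    (hd : IsC1Pair R h₀ v₀) : ∃ h v : ℝ → ℝ → ℝ, Continuous ↿h ∧ Continuous ↿v ∧
      (∀ u, 0 ≤ u → IsC1Pair R (h u) (v u)) ∧
      ∀ T, TendstoUniformlyOn (fun n => ↿(H n)) ↿h Filter.atTop (Icc 0 T ×ˢ Icc 0 R) := by
  have hH := hI.uniformCauchySeqOn hR.le hd
  obtain ⟨h, hh, hHh⟩ := exists_continuous_limit hR.le (hI.continuous hd) hH
  obtain ⟨v, hv, hVv⟩ := exists_continuous_limit hR.le (hI.continuous_deriv hd) fun T =>
    uniformCauchySeqOn_deriv hR (fun n u hu => hI.isC1Pair hd n hu.1)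
      (hI.exists_oscLE_deriv hR.le hd T) (hH T)
  refine ⟨h, v, hh, hv, fun u hu => ⟨by fun_prop, by fun_prop, ?_⟩, hHh⟩
  have hslice : MapsTo (Prod.mk u) (Icc 0 R) (Icc 0 u ×ˢ Icc 0 R) := fun r hr =>
    ⟨right_mem_Icc.2 hu, hr⟩
  exact hasDerivWithinAt_of_tendstoUniformlyOn
    (fun n => (hI.isC1Pair hd n hu).deriv) (by fun_prop)
    (((hHh u).comp (Prod.mk u)).mono hslice) (((hVv u).comp (Prod.mk u)).mono hslice)

-- The limit is a fixed point because the iterates also converge to the step taken from it.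
theorem IsIteration.limit_eq_step (hI : c.IsIteration h₀ v₀ H V) (hR : 0 ≤ R)
    (hd : IsC1Pair R h₀ v₀) (hv : Continuous ↿v) (hp : ∀ u, 0 ≤ u → IsC1Pair R (h u) (v u))
    (hlim : ∀ T, TendstoUniformlyOn (fun n => ↿(H n)) ↿h Filter.atTop (Icc 0 T ×ˢ Icc 0 R))
    {h' v' : ℝ → ℝ → ℝ} (hs : c.IsStep h₀ v₀ v h' v') (hu : 0 ≤ u) :
    EqOn (h' u) (h u) (Icc 0 R) := by
  intro r hr
  obtain ⟨W₁, hW₁⟩ := hI.exists_abs_deriv_le hR hd u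
  obtain ⟨W₂, -, hW₂⟩ := exists_abs_le_of_continuous hv R u
  obtain ⟨W₃, -, hW₃⟩ := exists_abs_le_of_continuous hs.isTransport.continuous_deriv R u
  obtain ⟨C, hC₀, hC⟩ := (c.lipschitz_velocity (max W₁ (max W₂ W₃))).exists_forcing_le
    (c.lipschitz_source _)
  have hclose : ∀ ε > 0, ∀ᶠ n in Filter.atTop, |H (n + 1) u r - h' u r| ≤ C * ε * u := by
    intro ε hε
    filter_upwards [Metric.tendstoUniformlyOn_iff.1 (hlim u) ε hε] with n hn
    refine (hI.step n).abs_sub_le hs hR (hI.continuous_deriv hd n) hu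
      (fun s => (hasDerivAt_id s).const_mul (C * ε)) (by simp) (fun s hs' ρ hρ => ?_) r hr
    rw [mul_one]
    refine hC _ _ _ _ _ _ (hI.isC1Pair hd n hs'.1) (hp s hs'.1)
      (fun r hr => (hW₁ n s hs' r hr).trans (le_max_left _ _))
      (fun r hr => (hW₂ s hs' r hr).trans ((le_max_left _ _).trans (le_max_right _ _)))
      (fun r hr => ?_) ((hW₃ s hs' ρ hρ).trans ((le_max_right _ _).trans (le_max_right _ _))) ρ hρ
    rw [← Real.dist_eq, dist_comm]
    exact (hn (s, r) ⟨hs', hr⟩).le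
  have hstep : Filter.Tendsto (fun n => H (n + 1) u r) Filter.atTop (nhds (h' u r)) := by
    rw [Metric.tendsto_nhds]
    intro ε hε
    have hden : 0 < C * u + 1 := by positivity
    filter_upwards [hclose (ε / (C * u + 1)) (by positivity)] with n hn
    refine hn.trans_lt ?_
    rw [mul_div_assoc', div_mul_eq_mul_div, div_lt_iff₀ hden]
    linarith
  exact tendsto_nhds_unique hstep ((Filter.tendsto_add_atTop_iff_nat 1).2
    ((hlim u).tendsto_at (x := (u, r)) ⟨right_mem_Icc.2 hu, hr⟩))

theorem IsStep.congr {h' v' : ℝ → ℝ → ℝ} (hs : c.IsStep h₀ v₀ v h' v') (hR : 0 < R)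
    (hh : Continuous ↿h) (hv : Continuous ↿v) (hp : ∀ u, 0 ≤ u → IsC1Pair R (h u) (v u))
    (heq : ∀ u, 0 ≤ u → EqOn (h' u) (h u) (Icc 0 R)) : c.IsStep h₀ v₀ v h v := by
  have heq' : ∀ u, 0 ≤ u → EqOn (v' u) (v u) (Icc 0 R) := fun u hu r hr =>
    (uniqueDiffOn_Icc hR r hr).eq_deriv _ ((hs.isTransport.deriv_right u hu r hr).congr
      (fun x hx => (heq u hu hx).symm) (heq u hu hr).symm) ((hp u hu).deriv r hr)
  refine ⟨⟨hh, hv, fun u hu => (hp u hu).deriv, fun u hu r hr => ?_⟩, fun u χ hχ s hs' => ?_,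
    fun r hr => ?_, fun r hr => ?_⟩
  · rw [← heq' u hu hr]
    exact (hs.isTransport.deriv_left u hu r hr).congr (fun x hx => (heq x hx hr).symm)
      (heq u hu hr).symm
  · rw [← heq' s hs'.1 (hχ.mem s)]
    exact (hs.isCharSolution u χ hχ s hs').congr (fun x hx => (heq' x hx.1 (hχ.mem x)).symm)
      (heq' s hs'.1 (hχ.mem s)).symm
  · rw [← heq 0 le_rfl hr, hs.init hr]
  · rw [← heq' 0 le_rfl hr, hs.init_deriv hr]

theorem exists_isStep_self (c : TransportCoeffs R) (hR : 0 < R) (hd : IsC1Pair R h₀ v₀) :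
    ∃ h v, c.IsStep h₀ v₀ v h v := by
  obtain ⟨H, V, hI⟩ := c.exists_isIteration hR.le hd
  obtain ⟨h, v, hh, hv, hp, hlim⟩ := hI.exists_limit hR hd
  obtain ⟨h', v', hs⟩ := c.exists_isStep hR.le hd hv
  exact ⟨h, v, hs.congr hR hh hv hp fun u hu => hI.limit_eq_step hR.le hd hv hp hlim hs hu⟩

end Iteration

end TransportCoeffs

/-! ### Weighted radial means -/

/-- The weighted radial mean `∫₀¹ tᵏ φ(r t) dt`. If `φ = ∂ᵣ h`, then `radMean 1 φ = ∂ᵣ h̄`, where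
`h̄` is the radial average of `h`, and `h - h̄ = r * radMean 1 φ`. -/
def radMean (k : ℕ) (φ : ℝ → ℝ) (r : ℝ) : ℝ := ∫ t in (0 : ℝ)..1, t ^ k * φ (r * t)

section RadMean

variable {R r d m : ℝ} {k : ℕ} {h φ ψ : ℝ → ℝ}

@[fun_prop]
theorem continuous_radMean {X : Type*} [TopologicalSpace X] {Φ : X → ℝ → ℝ} {r : X → ℝ}
    (hΦ : Continuous fun p : X × ℝ => Φ p.1 p.2) (hr : Continuous r) :
    Continuous fun x => radMean k (Φ x) (r x) := by
  unfold radMean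
  fun_prop

theorem mul_mem_Icc {t : ℝ} (hr : r ∈ Icc 0 R) (ht : t ∈ Icc (0 : ℝ) 1) : r * t ∈ Icc 0 R :=
  ⟨mul_nonneg hr.1 ht.1, (mul_le_of_le_one_right hr.1 ht.2).trans hr.2⟩

theorem radMean_const (k : ℕ) (c r : ℝ) : radMean k (fun _ => c) r = c / (k + 1) := by
  simp [radMean, div_eq_inv_mul]

theorem radMean_zero_right (k : ℕ) (φ : ℝ → ℝ) : radMean k φ 0 = φ 0 / (k + 1) := by
  simpa only [radMean, zero_mul] using radMean_const k (φ 0) 0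

theorem radMean_sub (hφ : Continuous φ) (hψ : Continuous ψ) (r : ℝ) :
    radMean k (fun r => φ r - ψ r) r = radMean k φ r - radMean k ψ r := by
  simp only [radMean, mul_sub]
  exact intervalIntegral.integral_sub (Continuous.intervalIntegrable (by fun_prop) _ _)
    (Continuous.intervalIntegrable (by fun_prop) _ _)

theorem radMean_mono (hφ : Continuous φ) (hψ : Continuous ψ) (h : ∀ r ∈ Icc 0 R, φ r ≤ ψ r)
    (hr : r ∈ Icc 0 R) : radMean k φ r ≤ radMean k ψ r :=
  intervalIntegral.integral_mono_on zero_le_one (Continuous.intervalIntegrable (by fun_prop) _ _)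
    (Continuous.intervalIntegrable (by fun_prop) _ _) fun t ht =>
      mul_le_mul_of_nonneg_left (h _ (mul_mem_Icc hr ht)) (pow_nonneg ht.1 k)

theorem radMean_mem_Icc (hφ : Continuous φ) {a b : ℝ} (h : ∀ r ∈ Icc 0 R, φ r ∈ Icc a b)
    (hr : r ∈ Icc 0 R) : radMean k φ r ∈ Icc (a / (k + 1)) (b / (k + 1)) := by
  rw [← radMean_const k a r, ← radMean_const k b r]
  exact ⟨radMean_mono (by fun_prop) hφ (fun r hr => (h r hr).1) hr,
    radMean_mono hφ (by fun_prop) (fun r hr => (h r hr).2) hr⟩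

theorem abs_radMean_sub_le (hφ : Continuous φ) (hψ : Continuous ψ) {a b : ℝ}
    (h : ∀ t ∈ Icc (0 : ℝ) 1, |φ (a * t) - ψ (b * t)| ≤ m) :
    |radMean k φ a - radMean k ψ b| ≤ m := by
  rw [radMean, radMean, ← intervalIntegral.integral_sub
    (Continuous.intervalIntegrable (by fun_prop) _ _)
    (Continuous.intervalIntegrable (by fun_prop) _ _)]
  refine (intervalIntegral.norm_integral_le_of_norm_le_const (E := ℝ) (C := m)
    fun t ht => ?_).trans_eq (by rw [sub_zero, abs_one, mul_one])
  rw [uIoc_of_le zero_le_one] at ht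
  rw [← mul_sub, Real.norm_eq_abs, abs_mul, abs_of_nonneg (pow_nonneg ht.1.le k)]
  exact (mul_le_of_le_one_left (abs_nonneg _) (pow_le_one₀ ht.1.le ht.2)).trans
    (h t ⟨ht.1.le, ht.2⟩)

theorem abs_radMean_le (hφ : Continuous φ) (h : ∀ r ∈ Icc 0 R, |φ r| ≤ m) (hr : r ∈ Icc 0 R) :
    |radMean k φ r| ≤ m := by
  simpa [radMean_const] using abs_radMean_sub_le (k := k) (ψ := fun _ => 0) (b := 0) hφ
    (by fun_prop) fun t ht => by simpa using h _ (mul_mem_Icc hr ht)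

theorem pow_mul_radMean (k : ℕ) (φ : ℝ → ℝ) (r : ℝ) :
    r ^ (k + 1) * radMean k φ r = ∫ s in (0 : ℝ)..r, s ^ k * φ s := by
  have hsubst := intervalIntegral.mul_integral_comp_mul_left (a := 0) (b := 1) r
    (f := fun s => s ^ k * φ s)
  simp only [mul_zero, mul_one, mul_pow, mul_assoc, intervalIntegral.integral_const_mul] at hsubst
  rw [← hsubst, radMean]
  ring

theorem hasDerivAt_radMean (hφ : Continuous φ) (hr : 0 < r) :
    HasDerivAt (radMean k φ) ((φ r - (k + 1) * radMean k φ r) / r) r := by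
  have hr₀ := hr.ne'
  have hint : HasDerivAt (fun r => ∫ s in (0 : ℝ)..r, s ^ k * φ s) (r ^ k * φ r) r :=
    (Continuous.integral_hasStrictDerivAt (by fun_prop) 0 r).hasDerivAt
  refine ((hint.div (hasDerivAt_pow (k + 1) r) (pow_ne_zero _ hr₀)).congr_deriv
    ?_).congr_of_eventuallyEq ?_
  · rw [← pow_mul_radMean]
    push_cast
    field_simp
    ring
  · filter_upwards [lt_mem_nhds hr] with ρ hρ
    rw [Pi.div_apply, ← pow_mul_radMean, mul_div_cancel_left₀ _ (pow_ne_zero _ hρ.ne')]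

theorem sub_radMean_zero_eq (hψ : Continuous ψ) (hφ : ∀ r, HasDerivAt φ (r * ψ r) r) (r : ℝ) :
    φ r - radMean 0 φ r = r ^ 2 * radMean 2 ψ r := by
  have hφc : Continuous φ := continuous_iff_continuousAt.2 fun r => (hφ r).continuousAt
  rcases eq_or_ne r 0 with rfl | hr
  · simp [radMean_zero_right]
  have hparts := intervalIntegral.integral_eq_sub_of_hasDerivAt (a := 0) (b := r)
    (f := fun s => s * φ s) (f' := fun s => s ^ 0 * φ s + s ^ 2 * ψ s)
    (fun s _ => ((hasDerivAt_id s).mul (hφ s)).congr_deriv (by simp only [id]; ring))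
    (Continuous.intervalIntegrable (by fun_prop) _ _)
  rw [intervalIntegral.integral_add (Continuous.intervalIntegrable (by fun_prop) _ _)
    (Continuous.intervalIntegrable (by fun_prop) _ _), ← pow_mul_radMean, ← pow_mul_radMean]
    at hparts
  apply mul_left_cancel₀ hr
  linear_combination -hparts

theorem hasDerivWithinAt_mul_radMean_one (hφ : Continuous φ) : ∀ r ∈ Icc 0 R,
    HasDerivWithinAt (fun r => r * radMean 1 φ r) (φ r - radMean 1 φ r) (Icc 0 R) r := by
  refine hasDerivWithinAt_Icc_of_Ioo (by fun_prop) (by fun_prop) fun r hr => ?_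
  refine ((hasDerivAt_id r).mul (hasDerivAt_radMean hφ hr.1)).congr_deriv ?_
  have hr₀ := hr.1.ne'
  simp only [id]
  push_cast
  field_simp
  ring

theorem mul_mul_radMean_one (hh : ∀ r ∈ Icc 0 R, HasDerivWithinAt h (φ r) (Icc 0 R) r)
    (hφ : Continuous φ) (hr : r ∈ Icc 0 R) :
    r * (r * radMean 1 φ r) = r * h r - ∫ s in (0 : ℝ)..r, h s := by
  have hsub : Icc 0 r ⊆ Icc 0 R := Icc_subset_Icc_right hr.2
  have hhc : ContinuousOn h (Icc 0 r) := fun s hs =>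
    (hh s (hsub hs)).continuousWithinAt.mono hsub
  have hhi : IntervalIntegrable h MeasureTheory.volume 0 r := hhc.intervalIntegrable_of_Icc hr.1
  have hφi : IntervalIntegrable (fun s => s ^ 1 * φ s) MeasureTheory.volume 0 r :=
    Continuous.intervalIntegrable (by fun_prop) _ _
  have hparts := intervalIntegral.integral_eq_sub_of_hasDerivAt_of_le hr.1
    (f := fun s => s * h s) (f' := fun s => h s + s ^ 1 * φ s) (continuousOn_id.mul hhc)
    (fun s hs => ((hasDerivAt_id s).mul ((hh s (hsub ⟨hs.1.le, hs.2.le⟩)).hasDerivAt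
      (Icc_mem_nhds hs.1 (hs.2.trans_le hr.2)))).congr_deriv (by simp)) (hhi.add hφi)
  rw [intervalIntegral.integral_add hhi hφi, ← pow_mul_radMean] at hparts
  linear_combination hparts

-- `h - r * radMean 1 φ` is the radial average of `h`.
theorem abs_sub_mul_radMean_one_le (hh : ∀ r ∈ Icc 0 R, HasDerivWithinAt h (φ r) (Icc 0 R) r)
    (hφ : Continuous φ) (hd : ∀ r ∈ Icc 0 R, |h r| ≤ d) (hr : r ∈ Icc 0 R) :
    |h r - r * radMean 1 φ r| ≤ d := by
  rcases eq_or_lt_of_le hr.1 with rfl | hr₀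
  · simpa using hd 0 hr
  refine le_of_mul_le_mul_left ?_ hr₀
  calc r * |h r - r * radMean 1 φ r| = |∫ s in (0 : ℝ)..r, h s| := by
        rw [← abs_of_pos hr₀, ← abs_mul, abs_of_pos hr₀, mul_sub, mul_mul_radMean_one hh hφ hr,
          sub_sub_cancel]
    _ ≤ d * |r - 0| := intervalIntegral.norm_integral_le_of_norm_le_const (f := h) (C := d)
        fun s hs => by
          rw [uIoc_of_le hr.1] at hs
          exact hd s ⟨hs.1.le, hs.2.trans hr.2⟩
    _ = r * d := by rw [sub_zero, abs_of_pos hr₀, mul_comm]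

theorem abs_mul_radMean_one_le (hh : ∀ r ∈ Icc 0 R, HasDerivWithinAt h (φ r) (Icc 0 R) r)
    (hφ : Continuous φ) (hd : ∀ r ∈ Icc 0 R, |h r| ≤ d) (hr : r ∈ Icc 0 R) :
    |r * radMean 1 φ r| ≤ 2 * d := by
  have hmean := abs_sub_mul_radMean_one_le hh hφ hd hr
  calc |r * radMean 1 φ r| = |h r - (h r - r * radMean 1 φ r)| := by rw [sub_sub_cancel]
    _ ≤ |h r| + |h r - r * radMean 1 φ r| := abs_sub _ _
    _ ≤ 2 * d := by linarith [hd r hr]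

theorem IsC1Pair.abs_mul_radMean_one_sub_le {h₁ φ₁ h₂ φ₂ : ℝ → ℝ} (hp₁ : IsC1Pair R h₁ φ₁)
    (hp₂ : IsC1Pair R h₂ φ₂) (hd : ∀ r ∈ Icc 0 R, |h₁ r - h₂ r| ≤ d) (hr : r ∈ Icc 0 R) :
    |r * radMean 1 φ₁ r - r * radMean 1 φ₂ r| ≤ 2 * d := by
  have hφ₁ := hp₁.continuous_deriv
  have hφ₂ := hp₂.continuous_deriv
  rw [← mul_sub, ← radMean_sub hφ₁ hφ₂]
  exact abs_mul_radMean_one_le (h := fun r => h₁ r - h₂ r)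
    (fun r hr => (hp₁.deriv r hr).sub (hp₂.deriv r hr)) (by fun_prop) hd hr

end RadMean

/-! ### Operators with linear moduli of continuity -/

/-- `Φ` is bounded and preserves small oscillation, uniformly over functions bounded by `V`. Unlike
`PreservesOsc` alone, this is stable under products. -/
structure HasModulus (R V : ℝ) (Φ : (ℝ → ℝ) → ℝ → ℝ) : Prop where
  bounded : ∃ B, 0 ≤ B ∧ ∀ φ, Continuous φ → (∀ r ∈ Icc 0 R, |φ r| ≤ V) →
    ∀ r ∈ Icc 0 R, |Φ φ r| ≤ B
  preservesOsc : PreservesOsc R V Φ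

section HasModulus

variable {R V : ℝ} {Φ Ψ : (ℝ → ℝ) → ℝ → ℝ}

theorem hasModulus_eval : HasModulus R V (fun φ => φ) where
  bounded := ⟨|V|, abs_nonneg V, fun _ _ hV r hr => (hV r hr).trans (le_abs_self V)⟩
  preservesOsc := ⟨1, zero_le_one, fun _ _ _ _ _ _ _ hosc => by simpa only [one_mul] using hosc⟩

theorem hasModulus_of_lipschitz {B L : ℝ} (hB₀ : 0 ≤ B) (hL₀ : 0 ≤ L)
    (hB : ∀ φ, Continuous φ → ∀ r ∈ Icc 0 R, |Φ φ r| ≤ B)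
    (hL : ∀ φ, Continuous φ → ∀ a ∈ Icc 0 R, ∀ b ∈ Icc 0 R, |Φ φ a - Φ φ b| ≤ L * |a - b|) :
    HasModulus R V Φ where
  bounded := ⟨B, hB₀, fun φ hφ _ => hB φ hφ⟩
  preservesOsc := ⟨L, hL₀, fun φ hφ _ _ _ _ hδη _ a ha b hb hab => (hL φ hφ a ha b hb).trans
    (mul_le_mul_of_nonneg_left (hab.trans hδη) hL₀)⟩

theorem hasModulus_radius (R V : ℝ) : HasModulus R V (fun _ r => r) :=
  hasModulus_of_lipschitz (abs_nonneg R) zero_le_one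
    (fun _ _ r hr => by rw [abs_of_nonneg hr.1]; exact hr.2.trans (le_abs_self R))
    (fun _ _ a _ b _ => (one_mul _).ge)

theorem hasModulus_const (R V c : ℝ) : HasModulus R V (fun _ _ => c) :=
  hasModulus_of_lipschitz (abs_nonneg c) le_rfl (fun _ _ _ _ => le_rfl) (fun _ _ _ _ _ _ => by simp)

theorem HasModulus.add (hΦ : HasModulus R V Φ) (hΨ : HasModulus R V Ψ) :
    HasModulus R V (fun φ r => Φ φ r + Ψ φ r) where
  bounded := by
    obtain ⟨B₁, hB₁, hΦ⟩ := hΦ.bounded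
    obtain ⟨B₂, hB₂, hΨ⟩ := hΨ.bounded
    exact ⟨B₁ + B₂, by positivity, fun φ hφ hV r hr =>
      (abs_add_le _ _).trans (add_le_add (hΦ φ hφ hV r hr) (hΨ φ hφ hV r hr))⟩
  preservesOsc := by
    obtain ⟨C₁, hC₁, hΦ⟩ := hΦ.preservesOsc
    obtain ⟨C₂, hC₂, hΨ⟩ := hΨ.preservesOsc
    refine ⟨C₁ + C₂, by positivity, fun φ hφ hV δ η hδ hδη hosc a ha b hb hab => ?_⟩
    rw [add_sub_add_comm, add_mul]
    exact (abs_add_le _ _).trans (add_le_add (hΦ φ hφ hV δ η hδ hδη hosc a ha b hb hab)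
      (hΨ φ hφ hV δ η hδ hδη hosc a ha b hb hab))

theorem HasModulus.mul (hΦ : HasModulus R V Φ) (hΨ : HasModulus R V Ψ) :
    HasModulus R V (fun φ r => Φ φ r * Ψ φ r) := by
  obtain ⟨B₁, hB₁, hΦB⟩ := hΦ.bounded
  obtain ⟨B₂, hB₂, hΨB⟩ := hΨ.bounded
  obtain ⟨C₁, hC₁, hΦC⟩ := hΦ.preservesOsc
  obtain ⟨C₂, hC₂, hΨC⟩ := hΨ.preservesOsc
  refine ⟨⟨B₁ * B₂, by positivity, fun φ hφ hV r hr => ?_⟩, ⟨B₁ * C₂ + C₁ * B₂, by positivity,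
    fun φ hφ hV δ η hδ hδη hosc a ha b hb hab => ?_⟩⟩
  · rw [abs_mul]
    exact mul_le_mul (hΦB φ hφ hV r hr) (hΨB φ hφ hV r hr) (abs_nonneg _) hB₁
  · have hη := hδ.le.trans hδη
    calc |Φ φ a * Ψ φ a - Φ φ b * Ψ φ b|
        = |Φ φ a * (Ψ φ a - Ψ φ b) + (Φ φ a - Φ φ b) * Ψ φ b| := by ring_nf
      _ ≤ |Φ φ a| * |Ψ φ a - Ψ φ b| + |Φ φ a - Φ φ b| * |Ψ φ b| := by
        rw [← abs_mul, ← abs_mul]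
        exact abs_add_le _ _
      _ ≤ B₁ * (C₂ * η) + C₁ * η * B₂ := add_le_add
        (mul_le_mul (hΦB φ hφ hV a ha) (hΨC φ hφ hV δ η hδ hδη hosc a ha b hb hab)
          (abs_nonneg _) hB₁)
        (mul_le_mul (hΦC φ hφ hV δ η hδ hδη hosc a ha b hb hab) (hΨB φ hφ hV b hb)
          (abs_nonneg _) (by positivity))
      _ = (B₁ * C₂ + C₁ * B₂) * η := by ring

theorem HasModulus.radMean (hΦ : HasModulus R V Φ) (hc : ∀ φ, Continuous φ → Continuous (Φ φ))
    (k : ℕ) : HasModulus R V (fun φ => _root_.radMean k (Φ φ)) where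
  bounded := by
    obtain ⟨B, hB, hΦ⟩ := hΦ.bounded
    exact ⟨B, hB, fun φ hφ hV r hr => abs_radMean_le (hc φ hφ) (hΦ φ hφ hV) hr⟩
  preservesOsc := by
    obtain ⟨C, hC, hΦ⟩ := hΦ.preservesOsc
    refine ⟨C, hC, fun φ hφ hV δ η hδ hδη hosc a ha b hb hab =>
      abs_radMean_sub_le (hc φ hφ) (hc φ hφ) fun t ht =>
        hΦ φ hφ hV δ η hδ hδη hosc _ (mul_mem_Icc ha ht) _ (mul_mem_Icc hb ht) ?_⟩
    rw [← sub_mul, abs_mul, abs_of_nonneg ht.1]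
    exact (mul_le_of_le_one_right (abs_nonneg _) ht.2).trans hab

theorem HasModulus.clamp (hΦ : HasModulus R V Φ) {a b : ℝ} (hab : a ≤ b) :
    HasModulus R V (fun φ r => clamp a b (Φ φ r)) where
  bounded := ⟨max |a| |b|, by positivity, fun φ _ _ r _ =>
    abs_le_max_abs_abs (clamp_mem hab _).1 (clamp_mem hab _).2⟩
  preservesOsc := by
    obtain ⟨C, hC, hΦ⟩ := hΦ.preservesOsc
    exact ⟨C, hC, fun φ hφ hV δ η hδ hδη hosc p hp q hq hpq =>
      (abs_clamp_sub_clamp_le a b _ _).trans (hΦ φ hφ hV δ η hδ hδη hosc p hp q hq hpq)⟩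

end HasModulus

section AntiderivLipschitz

variable {R V : ℝ} {Φ Ψ : (ℝ → ℝ) → ℝ → ℝ}

theorem AntiderivLipschitz.congr (hΦ : AntiderivLipschitz R V Φ)
    (h : ∀ φ, Continuous φ → EqOn (Φ φ) (Ψ φ) (Icc 0 R)) : AntiderivLipschitz R V Ψ := by
  obtain ⟨C, hC, hΦ⟩ := hΦ
  refine ⟨C, hC, fun h₁ φ₁ h₂ φ₂ d hp₁ hp₂ hV₁ hV₂ hd r hr => ?_⟩
  rw [← h φ₁ hp₁.continuous_deriv hr, ← h φ₂ hp₂.continuous_deriv hr]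
  exact hΦ h₁ φ₁ h₂ φ₂ d hp₁ hp₂ hV₁ hV₂ hd r hr

theorem AntiderivLipschitz.sub (hΦ : AntiderivLipschitz R V Φ) (hΨ : AntiderivLipschitz R V Ψ) :
    AntiderivLipschitz R V (fun φ r => Φ φ r - Ψ φ r) := by
  obtain ⟨C₁, hC₁, hΦ⟩ := hΦ
  obtain ⟨C₂, hC₂, hΨ⟩ := hΨ
  refine ⟨C₁ + C₂, by positivity, fun h₁ φ₁ h₂ φ₂ d hp₁ hp₂ hV₁ hV₂ hd r hr => ?_⟩
  rw [sub_sub_sub_comm, add_mul]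
  exact (abs_sub _ _).trans (add_le_add (hΦ h₁ φ₁ h₂ φ₂ d hp₁ hp₂ hV₁ hV₂ hd r hr)
    (hΨ h₁ φ₁ h₂ φ₂ d hp₁ hp₂ hV₁ hV₂ hd r hr))

theorem AntiderivLipschitz.mul_continuous {g : ℝ → ℝ} (hΦ : AntiderivLipschitz R V Φ)
    (hg : Continuous g) : AntiderivLipschitz R V (fun φ r => Φ φ r * g r) := by
  obtain ⟨C, hC, hΦ⟩ := hΦ
  obtain ⟨B, hB⟩ := isCompact_Icc.exists_bound_of_continuousOn (hg.continuousOn (s := Icc 0 R))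
  refine ⟨C * |B|, by positivity, fun h₁ φ₁ h₂ φ₂ d hp₁ hp₂ hV₁ hV₂ hd r hr => ?_⟩
  rw [← sub_mul, abs_mul, mul_right_comm]
  have hdiff := hΦ h₁ φ₁ h₂ φ₂ d hp₁ hp₂ hV₁ hV₂ hd r hr
  exact mul_le_mul hdiff ((hB r hr).trans (le_abs_self B)) (abs_nonneg _)
    ((abs_nonneg _).trans hdiff)

theorem AntiderivLipschitz.radMean (hΦ : AntiderivLipschitz R V Φ)
    (hc : ∀ φ, Continuous φ → Continuous (Φ φ)) (k : ℕ) :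
    AntiderivLipschitz R V (fun φ => _root_.radMean k (Φ φ)) := by
  obtain ⟨C, hC, hΦ⟩ := hΦ
  exact ⟨C, hC, fun h₁ φ₁ h₂ φ₂ d hp₁ hp₂ hV₁ hV₂ hd r hr =>
    abs_radMean_sub_le (hc φ₁ hp₁.continuous_deriv) (hc φ₂ hp₂.continuous_deriv) fun t ht =>
      hΦ h₁ φ₁ h₂ φ₂ d hp₁ hp₂ hV₁ hV₂ hd _ (mul_mem_Icc hr ht)⟩

-- `radMean 1` itself does not depend Lipschitz continuously on the antiderivative, but
-- `r * radMean 1` does, so one factor `r` can be moved to the operator on the left.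
theorem AntiderivLipschitz.mul_mul_radMean_one (hΦ : AntiderivLipschitz R V fun φ r => r * Φ φ r)
    (hb : ∃ B, 0 ≤ B ∧ ∀ φ, Continuous φ → (∀ r ∈ Icc 0 R, |φ r| ≤ V) →
      ∀ r ∈ Icc 0 R, |Φ φ r| ≤ B) :
    AntiderivLipschitz R V (fun φ r => Φ φ r * (r * _root_.radMean 1 φ r)) := by
  obtain ⟨C, hC, hΦ⟩ := hΦ
  obtain ⟨B, hB, hb⟩ := hb
  refine ⟨B * 2 + C * |V|, by positivity, fun h₁ φ₁ h₂ φ₂ d hp₁ hp₂ hV₁ hV₂ hd r hr => ?_⟩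
  have hdiff := hΦ h₁ φ₁ h₂ φ₂ d hp₁ hp₂ hV₁ hV₂ hd r hr
  have hmean := (abs_radMean_le (k := 1) hp₂.continuous_deriv hV₂ hr).trans (le_abs_self V)
  calc _ = |Φ φ₁ r * (r * _root_.radMean 1 φ₁ r - r * _root_.radMean 1 φ₂ r) +
          (r * Φ φ₁ r - r * Φ φ₂ r) * _root_.radMean 1 φ₂ r| := by ring_nf
    _ ≤ |Φ φ₁ r| * |r * _root_.radMean 1 φ₁ r - r * _root_.radMean 1 φ₂ r| +
          |r * Φ φ₁ r - r * Φ φ₂ r| * |_root_.radMean 1 φ₂ r| := by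
        rw [← abs_mul, ← abs_mul]
        exact abs_add_le _ _
    _ ≤ B * (2 * d) + C * d * |V| := add_le_add
        (mul_le_mul (hb φ₁ hp₁.continuous_deriv hV₁ r hr)
          (hp₁.abs_mul_radMean_one_sub_le hp₂ hd hr) (abs_nonneg _) hB)
        (mul_le_mul hdiff hmean (abs_nonneg _) ((abs_nonneg _).trans hdiff))
    _ = (B * 2 + C * |V|) * d := by ring

end AntiderivLipschitz

/-! ### The coefficients of the reduced equation as functions of `∂ᵣ h` -/

/-- The radial derivative `∂ᵣ h̄` of the radial average, as a function of `φ = ∂ᵣ h`, truncated at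
the level `x`. The truncation makes the metric coefficients bounded; it has no effect as long as
`|∂ᵣ h| ≤ x`. -/
def truncMean (x : ℝ) (φ : ℝ → ℝ) (r : ℝ) : ℝ := clamp (-x) x (radMean 1 φ r)

/-- The metric coefficient `f`, as a function of `φ = ∂ᵣ h`: since `h - h̄ = r * ∂ᵣ h̄`, the
integrand `(h - h̄)² / s` is `s * (∂ᵣ h̄)²`. -/
def lapse (κ x : ℝ) (φ : ℝ → ℝ) (r : ℝ) : ℝ :=
  exp (κ / 2 * ∫ s in (0 : ℝ)..r, s * truncMean x φ s ^ 2)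

/-- The function `f * (1 - Λ r²)`, whose radial mean is the metric coefficient `f̃`. -/
def lapseLam (Λ κ x : ℝ) (φ : ℝ → ℝ) (r : ℝ) : ℝ := lapse κ x φ r * (1 - Λ * r ^ 2)

/-- The radial derivative of `lapseLam`, divided by `r`. -/
def lapseLamDeriv (Λ κ x : ℝ) (φ : ℝ → ℝ) (r : ℝ) : ℝ :=
  κ / 2 * truncMean x φ r ^ 2 * lapse κ x φ r * (1 - Λ * r ^ 2) - 2 * Λ * lapse κ x φ r

/-- The characteristic velocity `f̃ / 2`, as a function of `φ = ∂ᵣ h`. -/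
def velocity (Λ κ x : ℝ) (φ : ℝ → ℝ) (r : ℝ) : ℝ := radMean 0 (lapseLam Λ κ x φ) r / 2

/-- The coefficient `G` divided by `r`, as a function of `φ = ∂ᵣ h`. It is continuous up to the
center and negative for small data; `r * dampingRate = G` is the radial derivative of the
velocity. -/
def dampingRate (Λ κ x : ℝ) (φ : ℝ → ℝ) (r : ℝ) : ℝ := radMean 2 (lapseLamDeriv Λ κ x φ) r / 2

/-- The source term `G * (h - h̄)`, as a function of `φ = ∂ᵣ h`. -/
def source (Λ κ x : ℝ) (φ : ℝ → ℝ) (r : ℝ) : ℝ :=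
  r * dampingRate Λ κ x φ r * (r * radMean 1 φ r)

/-- The deviation of `G'` from `G / r`, which measures how far the source term is from
being damped at the same rate as `∂ᵣ h`. -/
def defect (Λ κ x : ℝ) (φ : ℝ → ℝ) (r : ℝ) : ℝ :=
  lapseLamDeriv Λ κ x φ r / 2 - 3 * dampingRate Λ κ x φ r

/-- The radial derivative of the source term. -/
def sourceDeriv (Λ κ x : ℝ) (φ : ℝ → ℝ) (r : ℝ) : ℝ :=
  r * (defect Λ κ x φ r * radMean 1 φ r + dampingRate Λ κ x φ r * φ r)

section Continuity

variable {X : Type*} [TopologicalSpace X] {Φ : X → ℝ → ℝ} {ρ : X → ℝ} {Λ κ x : ℝ}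

@[fun_prop]
theorem continuous_truncMean (hΦ : Continuous fun p : X × ℝ => Φ p.1 p.2) (hρ : Continuous ρ) :
    Continuous fun p => truncMean x (Φ p) (ρ p) := by
  unfold truncMean
  fun_prop

@[fun_prop]
theorem continuous_lapse (hΦ : Continuous fun p : X × ℝ => Φ p.1 p.2) (hρ : Continuous ρ) :
    Continuous fun p => lapse κ x (Φ p) (ρ p) := by
  unfold lapse
  fun_prop

@[fun_prop]
theorem continuous_lapseLam (hΦ : Continuous fun p : X × ℝ => Φ p.1 p.2) (hρ : Continuous ρ) :
    Continuous fun p => lapseLam Λ κ x (Φ p) (ρ p) := by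
  unfold lapseLam
  fun_prop

@[fun_prop]
theorem continuous_lapseLamDeriv (hΦ : Continuous fun p : X × ℝ => Φ p.1 p.2)
    (hρ : Continuous ρ) : Continuous fun p => lapseLamDeriv Λ κ x (Φ p) (ρ p) := by
  unfold lapseLamDeriv
  fun_prop

@[fun_prop]
theorem continuous_velocity (hΦ : Continuous fun p : X × ℝ => Φ p.1 p.2) (hρ : Continuous ρ) :
    Continuous fun p => velocity Λ κ x (Φ p) (ρ p) := by
  unfold velocity
  fun_prop

@[fun_prop]
theorem continuous_dampingRate (hΦ : Continuous fun p : X × ℝ => Φ p.1 p.2) (hρ : Continuous ρ) :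
    Continuous fun p => dampingRate Λ κ x (Φ p) (ρ p) := by
  unfold dampingRate
  fun_prop

@[fun_prop]
theorem continuous_source (hΦ : Continuous fun p : X × ℝ => Φ p.1 p.2) (hρ : Continuous ρ) :
    Continuous fun p => source Λ κ x (Φ p) (ρ p) := by
  unfold source
  fun_prop

@[fun_prop]
theorem continuous_defect (hΦ : Continuous fun p : X × ℝ => Φ p.1 p.2) (hρ : Continuous ρ) :
    Continuous fun p => defect Λ κ x (Φ p) (ρ p) := by
  unfold defect
  fun_prop

@[fun_prop]
theorem continuous_sourceDeriv (hΦ : Continuous fun p : X × ℝ => Φ p.1 p.2) (hρ : Continuous ρ) :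
    Continuous fun p => sourceDeriv Λ κ x (Φ p) (ρ p) := by
  unfold sourceDeriv
  fun_prop

end Continuity

section Derivatives

variable {Λ κ x R r : ℝ} {φ : ℝ → ℝ}

theorem hasDerivAt_lapseLam (hφ : Continuous φ) (r : ℝ) :
    HasDerivAt (lapseLam Λ κ x φ) (r * lapseLamDeriv Λ κ x φ r) r := by
  have hint : HasDerivAt (fun r => ∫ s in (0 : ℝ)..r, s * truncMean x φ s ^ 2)
      (r * truncMean x φ r ^ 2) r :=
    (Continuous.integral_hasStrictDerivAt (by fun_prop) 0 r).hasDerivAt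
  refine ((hint.const_mul (κ / 2)).exp.mul
    (((hasDerivAt_pow 2 r).const_mul Λ).const_sub 1)).congr_deriv ?_
  simp only [lapseLamDeriv, lapse]
  push_cast
  ring

theorem lapseLam_half_sub_velocity (hφ : Continuous φ) (r : ℝ) :
    lapseLam Λ κ x φ r / 2 - velocity Λ κ x φ r = r ^ 2 * dampingRate Λ κ x φ r := by
  rw [velocity, ← sub_div, sub_radMean_zero_eq (by fun_prop) (hasDerivAt_lapseLam hφ), dampingRate,
    mul_div_assoc]

theorem hasDerivWithinAt_velocity (hφ : Continuous φ) : ∀ r ∈ Icc 0 R,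
    HasDerivWithinAt (velocity Λ κ x φ) (r * dampingRate Λ κ x φ r) (Icc 0 R) r := by
  refine hasDerivWithinAt_Icc_of_Ioo (by fun_prop) (by fun_prop) fun r hr => ?_
  refine ((hasDerivAt_radMean (by fun_prop) hr.1).div_const 2).congr_deriv ?_
  have hsub := lapseLam_half_sub_velocity (Λ := Λ) (κ := κ) (x := x) hφ r
  have hr₀ := hr.1.ne'
  rw [velocity] at hsub
  push_cast
  field_simp
  linear_combination 2 * hsub

theorem hasDerivWithinAt_mul_dampingRate (hφ : Continuous φ) : ∀ r ∈ Icc 0 R,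
    HasDerivWithinAt (fun r => r * dampingRate Λ κ x φ r)
      (defect Λ κ x φ r + dampingRate Λ κ x φ r) (Icc 0 R) r := by
  refine hasDerivWithinAt_Icc_of_Ioo (by fun_prop) (by fun_prop) fun r hr => ?_
  refine ((hasDerivAt_id r).mul ((hasDerivAt_radMean (k := 2)
    (φ := lapseLamDeriv Λ κ x φ) (by fun_prop) hr.1).div_const 2)).congr_deriv ?_
  have hr₀ := hr.1.ne'
  simp only [id, defect, dampingRate]
  push_cast
  field_simp
  ring

theorem hasDerivWithinAt_source (hφ : Continuous φ) : ∀ r ∈ Icc 0 R,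
    HasDerivWithinAt (source Λ κ x φ) (sourceDeriv Λ κ x φ r) (Icc 0 R) r := fun r hr => by
  refine ((hasDerivWithinAt_mul_dampingRate hφ r hr).mul
    (hasDerivWithinAt_mul_radMean_one hφ r hr)).congr_deriv ?_
  rw [sourceDeriv]
  ring

end Derivatives

section Bounds

variable {Λ κ x R r : ℝ} {φ : ℝ → ℝ}

theorem abs_truncMean_le (hx : 0 ≤ x) (φ : ℝ → ℝ) (r : ℝ) : |truncMean x φ r| ≤ x :=
  abs_le.2 (clamp_mem (neg_le_self hx) _)

/-- The upper bound of `lapse κ x φ` on `[0, R]`. -/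
def lapseBound (κ x R : ℝ) : ℝ := exp (κ / 2 * (R * x ^ 2 * R))

theorem lapseBound_pos : 0 < lapseBound κ x R := exp_pos _

theorem abs_integral_truncMean_sub_le (hx : 0 ≤ x) (hφ : Continuous φ) {a b : ℝ}
    (ha : a ∈ Icc 0 R) (hb : b ∈ Icc 0 R) :
    |(∫ s in (0 : ℝ)..a, s * truncMean x φ s ^ 2) - ∫ s in (0 : ℝ)..b, s * truncMean x φ s ^ 2|
      ≤ R * x ^ 2 * |a - b| := by
  rw [intervalIntegral.integral_interval_sub_left
    (Continuous.intervalIntegrable (by fun_prop) _ _)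
    (Continuous.intervalIntegrable (by fun_prop) _ _)]
  refine intervalIntegral.norm_integral_le_of_norm_le_const (E := ℝ) fun s hs => ?_
  obtain ⟨hs₀, hsR⟩ : s ∈ Icc 0 R := (uIoc_subset_uIcc.trans (uIcc_subset_Icc hb ha)) hs
  have := hs₀.trans hsR
  rw [Real.norm_eq_abs, abs_mul, abs_of_nonneg hs₀, abs_pow]
  gcongr
  exact abs_truncMean_le hx φ s

theorem lapse_exponent_le (hκ : 0 ≤ κ) (hx : 0 ≤ x) (hφ : Continuous φ) (hr : r ∈ Icc 0 R) :
    κ / 2 * (∫ s in (0 : ℝ)..r, s * truncMean x φ s ^ 2) ≤ κ / 2 * (R * x ^ 2 * R) := by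
  have hR : 0 ≤ R := hr.1.trans hr.2
  have hint := abs_integral_truncMean_sub_le hx hφ hr ⟨le_rfl, hR⟩
  rw [intervalIntegral.integral_same, sub_zero, sub_zero, abs_of_nonneg hr.1] at hint
  refine mul_le_mul_of_nonneg_left ((le_abs_self _).trans (hint.trans ?_)) (by positivity)
  gcongr
  exact hr.2

theorem lapse_le (hκ : 0 ≤ κ) (hx : 0 ≤ x) (hφ : Continuous φ) (hr : r ∈ Icc 0 R) :
    lapse κ x φ r ≤ lapseBound κ x R :=
  exp_le_exp.2 (lapse_exponent_le hκ hx hφ hr)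

theorem one_le_lapse (hκ : 0 ≤ κ) (hr : 0 ≤ r) : 1 ≤ lapse κ x φ r :=
  one_le_exp (mul_nonneg (by positivity) (intervalIntegral.integral_nonneg hr fun _ hs =>
    mul_nonneg hs.1 (sq_nonneg _)))

theorem abs_one_sub_mul_sq_le (hΛ : 0 ≤ Λ) (hr : r ∈ Icc 0 R) :
    |1 - Λ * r ^ 2| ≤ 1 + Λ * R ^ 2 := by
  have hle : Λ * r ^ 2 ≤ Λ * R ^ 2 :=
    mul_le_mul_of_nonneg_left (pow_le_pow_left₀ hr.1 hr.2 2) hΛ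
  have hnonneg : 0 ≤ Λ * r ^ 2 := by positivity
  rw [abs_le]
  constructor <;> linarith

theorem abs_lapseLam_le (hΛ : 0 ≤ Λ) (hκ : 0 ≤ κ) (hx : 0 ≤ x) (hφ : Continuous φ)
    (hr : r ∈ Icc 0 R) : |lapseLam Λ κ x φ r| ≤ lapseBound κ x R * (1 + Λ * R ^ 2) := by
  rw [lapseLam, abs_mul, abs_of_pos (zero_lt_one.trans_le (one_le_lapse hκ hr.1))]
  exact mul_le_mul (lapse_le hκ hx hφ hr) (abs_one_sub_mul_sq_le hΛ hr) (abs_nonneg _)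
    lapseBound_pos.le

theorem abs_lapseLamDeriv_add_le (hΛ : 0 ≤ Λ) (hκ : 0 ≤ κ) (hx : 0 ≤ x) (hφ : Continuous φ)
    (hr : r ∈ Icc 0 R) :
    |lapseLamDeriv Λ κ x φ r + 2 * Λ * lapse κ x φ r|
      ≤ κ / 2 * x ^ 2 * (lapseBound κ x R * (1 + Λ * R ^ 2)) := by
  have hsplit : lapseLamDeriv Λ κ x φ r + 2 * Λ * lapse κ x φ r =
      κ / 2 * truncMean x φ r ^ 2 * lapseLam Λ κ x φ r := by
    rw [lapseLamDeriv, lapseLam]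
    ring
  rw [hsplit, abs_mul, abs_mul, abs_pow, abs_of_nonneg (by positivity : 0 ≤ κ / 2)]
  gcongr
  · exact abs_truncMean_le hx φ r
  · exact abs_lapseLam_le hΛ hκ hx hφ hr

theorem abs_exp_sub_exp_le {a b m : ℝ} (ha : a ≤ m) (hb : b ≤ m) :
    |exp a - exp b| ≤ exp m * |a - b| :=
  (convex_Iic m).norm_image_sub_le_of_norm_hasDerivWithin_le (f := exp) (f' := exp) (C := exp m)
    (fun t _ => (hasDerivAt_exp t).hasDerivWithinAt)
    (fun t ht => by rw [Real.norm_eq_abs, abs_exp]; exact exp_le_exp.2 ht) hb ha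

end Bounds

/-! ### Regularity of the coefficients -/

section Lipschitz

variable {Λ κ x R V : ℝ}

theorem abs_integral_sq_truncMean_sub_le {h₁ φ₁ h₂ φ₂ : ℝ → ℝ} {d r : ℝ} (hx : 0 ≤ x)
    (hp₁ : IsC1Pair R h₁ φ₁) (hp₂ : IsC1Pair R h₂ φ₂) (hd : ∀ r ∈ Icc 0 R, |h₁ r - h₂ r| ≤ d)
    (hr : r ∈ Icc 0 R) :
    |(∫ s in (0 : ℝ)..r, s * truncMean x φ₁ s ^ 2) - ∫ s in (0 : ℝ)..r, s * truncMean x φ₂ s ^ 2|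
      ≤ 2 * x * (2 * d) * R := by
  have hφ₁ := hp₁.continuous_deriv
  have hφ₂ := hp₂.continuous_deriv
  have hd₀ : 0 ≤ d := (abs_nonneg _).trans (hd r hr)
  have hintegrand : ∀ s ∈ Icc 0 R,
      |s * truncMean x φ₁ s ^ 2 - s * truncMean x φ₂ s ^ 2| ≤ 2 * x * (2 * d) := fun s hs => by
    have hsum : |truncMean x φ₁ s + truncMean x φ₂ s| ≤ 2 * x := (abs_add_le _ _).trans
      (by linarith [abs_truncMean_le hx φ₁ s, abs_truncMean_le hx φ₂ s])
    have hdiff : |s * (truncMean x φ₁ s - truncMean x φ₂ s)| ≤ 2 * d := by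
      refine le_trans ?_ (hp₁.abs_mul_radMean_one_sub_le hp₂ hd hs)
      rw [← mul_sub, abs_mul, abs_mul]
      exact mul_le_mul_of_nonneg_left (abs_clamp_sub_clamp_le _ _ _ _) (abs_nonneg s)
    calc |s * truncMean x φ₁ s ^ 2 - s * truncMean x φ₂ s ^ 2|
        = |truncMean x φ₁ s + truncMean x φ₂ s| * |s * (truncMean x φ₁ s - truncMean x φ₂ s)| := by
          rw [← abs_mul]
          ring_nf
      _ ≤ 2 * x * (2 * d) := mul_le_mul hsum hdiff (abs_nonneg _) (by positivity)
  rw [← intervalIntegral.integral_sub (Continuous.intervalIntegrable (by fun_prop) _ _)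
    (Continuous.intervalIntegrable (by fun_prop) _ _)]
  refine (intervalIntegral.norm_integral_le_of_norm_le_const (E := ℝ) fun s hs => ?_).trans
    (mul_le_mul_of_nonneg_left (b := |r - 0|) ?_ (by positivity))
  · rw [uIoc_of_le hr.1] at hs
    exact hintegrand s ⟨hs.1.le, hs.2.trans hr.2⟩
  · rw [sub_zero, abs_of_nonneg hr.1]
    exact hr.2

theorem antiderivLipschitz_lapse (hκ : 0 ≤ κ) (hx : 0 ≤ x) (hR : 0 ≤ R) :
    AntiderivLipschitz R V (lapse κ x) := by
  refine ⟨lapseBound κ x R * (κ / 2 * (2 * x * 2 * R)),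
    mul_nonneg lapseBound_pos.le (by positivity), fun h₁ φ₁ h₂ φ₂ d hp₁ hp₂ _ _ hd r hr => ?_⟩
  calc |lapse κ x φ₁ r - lapse κ x φ₂ r|
      ≤ lapseBound κ x R * |κ / 2 * (∫ s in (0 : ℝ)..r, s * truncMean x φ₁ s ^ 2) -
          κ / 2 * ∫ s in (0 : ℝ)..r, s * truncMean x φ₂ s ^ 2| :=
        abs_exp_sub_exp_le (lapse_exponent_le hκ hx hp₁.continuous_deriv hr)
          (lapse_exponent_le hκ hx hp₂.continuous_deriv hr)
    _ ≤ lapseBound κ x R * (κ / 2 * (2 * x * (2 * d) * R)) := by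
        rw [← mul_sub, abs_mul, abs_of_nonneg (by positivity : 0 ≤ κ / 2)]
        exact mul_le_mul_of_nonneg_left (mul_le_mul_of_nonneg_left
          (abs_integral_sq_truncMean_sub_le hx hp₁ hp₂ hd hr) (by positivity)) lapseBound_pos.le
    _ = lapseBound κ x R * (κ / 2 * (2 * x * 2 * R)) * d := by ring

theorem antiderivLipschitz_lapseLam (hκ : 0 ≤ κ) (hx : 0 ≤ x) (hR : 0 ≤ R) :
    AntiderivLipschitz R V (lapseLam Λ κ x) :=
  (antiderivLipschitz_lapse hκ hx hR).mul_continuous (by fun_prop)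

theorem antiderivLipschitz_velocity (hκ : 0 ≤ κ) (hx : 0 ≤ x) (hR : 0 ≤ R) :
    AntiderivLipschitz R V (velocity Λ κ x) :=
  (((antiderivLipschitz_lapseLam hκ hx hR).radMean (fun _ _ => by fun_prop) 0).mul_continuous
    (continuous_const (y := 2⁻¹))).congr fun _ _ _ _ => (div_eq_mul_inv _ _).symm

theorem hasModulus_truncMean (hx : 0 ≤ x) : HasModulus R V (truncMean x) :=
  (hasModulus_eval.radMean (fun _ h => h) 1).clamp (neg_le_self hx)

theorem hasModulus_lapse (hκ : 0 ≤ κ) (hx : 0 ≤ x) (hR : 0 ≤ R) : HasModulus R V (lapse κ x) := by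
  refine hasModulus_of_lipschitz (B := lapseBound κ x R)
    (L := lapseBound κ x R * (κ / 2 * (R * x ^ 2))) lapseBound_pos.le
    (mul_nonneg lapseBound_pos.le (by positivity))
    (fun φ hφ r hr => (abs_exp _).trans_le (lapse_le hκ hx hφ hr)) (fun φ hφ a ha b hb =>
      (abs_exp_sub_exp_le (lapse_exponent_le hκ hx hφ ha)
        (lapse_exponent_le hκ hx hφ hb)).trans ?_)
  rw [← mul_sub, abs_mul, abs_of_nonneg (by positivity : 0 ≤ κ / 2), mul_assoc _ (κ / 2 * _),
    mul_assoc (κ / 2)]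
  exact mul_le_mul_of_nonneg_left (mul_le_mul_of_nonneg_left
    (abs_integral_truncMean_sub_le hx hφ ha hb) (by positivity)) lapseBound_pos.le

theorem hasModulus_lapseLamDeriv (hκ : 0 ≤ κ) (hx : 0 ≤ x) (hR : 0 ≤ R) :
    HasModulus R V (lapseLamDeriv Λ κ x) := by
  have htrunc := hasModulus_truncMean (R := R) (V := V) hx
  have hlapse := hasModulus_lapse (V := V) hκ hx hR
  have hradius := hasModulus_radius R V
  convert ((((hasModulus_const R V (κ / 2)).mul (htrunc.mul htrunc)).mul hlapse).mul
    ((hasModulus_const R V 1).add ((hasModulus_const R V (-Λ)).mul (hradius.mul hradius)))).add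
    ((hasModulus_const R V (-2 * Λ)).mul hlapse) using 1
  funext φ r
  rw [lapseLamDeriv]
  ring

theorem hasModulus_dampingRate (hκ : 0 ≤ κ) (hx : 0 ≤ x) (hR : 0 ≤ R) :
    HasModulus R V (dampingRate Λ κ x) := by
  convert ((hasModulus_lapseLamDeriv (Λ := Λ) (V := V) hκ hx hR).radMean
    (fun _ _ => by fun_prop) 2).mul (hasModulus_const R V 2⁻¹) using 1
  funext φ r
  rw [dampingRate, div_eq_mul_inv]

theorem hasModulus_sourceDeriv (hκ : 0 ≤ κ) (hx : 0 ≤ x) (hR : 0 ≤ R) :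
    HasModulus R V (sourceDeriv Λ κ x) := by
  have hdamping := hasModulus_dampingRate (Λ := Λ) (V := V) hκ hx hR
  have hdefect := ((hasModulus_lapseLamDeriv (Λ := Λ) (V := V) hκ hx hR).mul
    (hasModulus_const R V 2⁻¹)).add ((hasModulus_const R V (-3)).mul hdamping)
  convert (hasModulus_radius R V).mul ((hdefect.mul
    (hasModulus_eval.radMean (fun _ h => h) 1)).add (hdamping.mul hasModulus_eval)) using 1
  funext φ r
  rw [sourceDeriv, defect]
  ring

theorem antiderivLipschitz_source (hκ : 0 ≤ κ) (hx : 0 ≤ x) (hR : 0 ≤ R) :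
    AntiderivLipschitz R V (source Λ κ x) := by
  have hdamping : AntiderivLipschitz R V fun φ r => r * (r * dampingRate Λ κ x φ r) :=
    (((antiderivLipschitz_lapseLam hκ hx hR).mul_continuous (continuous_const (y := 2⁻¹))).sub
      (antiderivLipschitz_velocity hκ hx hR)).congr fun φ hφ r _ => by
        linear_combination lapseLam_half_sub_velocity (Λ := Λ) (κ := κ) (x := x) hφ r
  exact hdamping.mul_mul_radMean_one
    ((hasModulus_radius R V).mul (hasModulus_dampingRate hκ hx hR)).bounded

end Lipschitz

/-! ### Small data -/

/-- The truncation level `x` is small in terms of the parameters of the problem: the coefficients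
of the reduced equation are then damping, and the velocity points outwards at `r = R`. -/
structure IsSmall (Λ κ R x : ℝ) : Prop where
  cosm_pos : 0 < Λ
  coupling_pos : 0 < κ
  radius_pos : 0 < R
  pos : 0 < x
  bound_le : lapseBound κ x R ≤ 7 / 6
  bound_lt : lapseBound κ x R < Λ * R ^ 2 / 3
  coupling_le : κ * x ^ 2 * (1 + Λ * R ^ 2) ≤ Λ / 6

theorem exists_isSmall {Λ κ R : ℝ} (hΛ : 0 < Λ) (hκ : 0 < κ) (hR : sqrt (3 / Λ) < R) :
    ∃ x, IsSmall Λ κ R x := by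
  have hR₀ : 0 < R := (sqrt_nonneg _).trans_lt hR
  have hΛR : 1 < Λ * R ^ 2 / 3 := by
    have hsq := (sqrt_lt' hR₀).1 hR
    rw [div_lt_iff₀ hΛ] at hsq
    linarith
  have hbound : Filter.Tendsto (fun x => lapseBound κ x R) (nhdsWithin 0 (Ioi 0)) (nhds 1) := by
    have hcont : Continuous fun x => lapseBound κ x R := by unfold lapseBound; fun_prop
    simpa [lapseBound] using (hcont.tendsto 0).mono_left nhdsWithin_le_nhds
  have hcoupling : Filter.Tendsto (fun x => κ * x ^ 2 * (1 + Λ * R ^ 2)) (nhdsWithin 0 (Ioi 0))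
      (nhds 0) := by
    have hcont : Continuous fun x => κ * x ^ 2 * (1 + Λ * R ^ 2) := by fun_prop
    simpa using (hcont.tendsto 0).mono_left nhdsWithin_le_nhds
  have hΛ₆ : 0 < Λ / 6 := by positivity
  obtain ⟨x, hle, hlt, hcoupling_lt, hx⟩ :=
    ((hbound.eventually_lt_const (by norm_num : (1 : ℝ) < 7 / 6)).and
      ((hbound.eventually_lt_const hΛR).and
        ((hcoupling.eventually_lt_const hΛ₆).and self_mem_nhdsWithin))).exists
  exact ⟨x, hΛ, hκ, hR₀, hx, hle.le, hlt, hcoupling_lt.le⟩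

namespace IsSmall

variable {Λ κ R x r : ℝ} {φ : ℝ → ℝ}

theorem lapseLamDeriv_mem (hs : IsSmall Λ κ R x) (hφ : Continuous φ) (hr : r ∈ Icc 0 R) :
    lapseLamDeriv Λ κ x φ r ∈ Icc (-(5 / 2 * Λ)) (-(3 / 2 * Λ)) := by
  have hΛ := hs.cosm_pos
  have hκ := hs.coupling_pos
  have hmain := abs_lapseLamDeriv_add_le hΛ.le hκ.le hs.pos.le hφ hr
  have herror : κ / 2 * x ^ 2 * (lapseBound κ x R * (1 + Λ * R ^ 2)) ≤ 7 / 6 / 2 * (Λ / 6) := by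
    calc _ = lapseBound κ x R / 2 * (κ * x ^ 2 * (1 + Λ * R ^ 2)) := by ring
      _ ≤ _ := by
        have := hs.bound_le
        have := hs.coupling_le
        gcongr
  have hupper : Λ * lapse κ x φ r ≤ Λ * (7 / 6) :=
    mul_le_mul_of_nonneg_left ((lapse_le hκ.le hs.pos.le hφ hr).trans hs.bound_le) hΛ.le
  have hlower : Λ * 1 ≤ Λ * lapse κ x φ r :=
    mul_le_mul_of_nonneg_left (one_le_lapse hκ.le hr.1) hΛ.le
  rw [abs_le] at hmain
  constructor <;> linarith

theorem dampingRate_mem (hs : IsSmall Λ κ R x) (hφ : Continuous φ) (hr : r ∈ Icc 0 R) :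
    dampingRate Λ κ x φ r ∈ Icc (-(5 / 12 * Λ)) (-(Λ / 4)) := by
  have hmean := radMean_mem_Icc (k := 2) (by fun_prop) (fun r hr => hs.lapseLamDeriv_mem hφ hr) hr
  push_cast at hmean
  rw [dampingRate]
  constructor <;> linarith [hmean.1, hmean.2]

theorem dampingRate_nonpos (hs : IsSmall Λ κ R x) (hφ : Continuous φ) (hr : r ∈ Icc 0 R) :
    dampingRate Λ κ x φ r ≤ 0 := by
  linarith [(hs.dampingRate_mem hφ hr).2, hs.cosm_pos]

theorem abs_dampingRate_le (hs : IsSmall Λ κ R x) (hφ : Continuous φ) (hr : r ∈ Icc 0 R) :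
    |dampingRate Λ κ x φ r| ≤ Λ / 2 := by
  rw [abs_of_nonpos (hs.dampingRate_nonpos hφ hr)]
  linarith [(hs.dampingRate_mem hφ hr).1, hs.cosm_pos]

theorem abs_defect_le (hs : IsSmall Λ κ R x) (hφ : Continuous φ) (hr : r ∈ Icc 0 R) :
    |defect Λ κ x φ r| ≤ Λ / 2 := by
  have hderiv := hs.lapseLamDeriv_mem hφ hr
  have hdamping := hs.dampingRate_mem hφ hr
  rw [defect, abs_le]
  constructor <;> linarith [hderiv.1, hderiv.2, hdamping.1, hdamping.2]

theorem abs_sourceDeriv_le (hs : IsSmall Λ κ R x) {N : ℝ} (hφ : Continuous φ)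
    (hN : ∀ r ∈ Icc 0 R, |φ r| ≤ N) (hr : r ∈ Icc 0 R) :
    |sourceDeriv Λ κ x φ r| ≤ R * Λ * N := by
  have hΛ := hs.cosm_pos
  have : 0 ≤ N := (abs_nonneg _).trans (hN r hr)
  have hR : 0 ≤ R := hr.1.trans hr.2
  calc |sourceDeriv Λ κ x φ r|
      = r * |defect Λ κ x φ r * radMean 1 φ r + dampingRate Λ κ x φ r * φ r| := by
        rw [sourceDeriv, abs_mul, abs_of_nonneg hr.1]
    _ ≤ R * (|defect Λ κ x φ r| * |radMean 1 φ r| + |dampingRate Λ κ x φ r| * |φ r|) := by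
        rw [← abs_mul, ← abs_mul]
        exact mul_le_mul hr.2 (abs_add_le _ _) (abs_nonneg _) hR
    _ ≤ R * (Λ / 2 * N + Λ / 2 * N) := by
        gcongr
        · exact hs.abs_defect_le hφ hr
        · exact abs_radMean_le hφ hN hr
        · exact hs.abs_dampingRate_le hφ hr
        · exact hN r hr
    _ = R * Λ * N := by ring

theorem velocity_right_neg (hs : IsSmall Λ κ R x) (hφ : Continuous φ) :
    velocity Λ κ x φ R < 0 := by
  have hΛ := hs.cosm_pos
  have hκ := hs.coupling_pos
  have hmean : radMean 0 (fun s => lapseBound κ x R - Λ * s ^ 2) R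
      = lapseBound κ x R - Λ * R ^ 2 / 3 := by
    simp only [radMean, pow_zero, one_mul, mul_pow]
    rw [intervalIntegral.integral_sub (Continuous.intervalIntegrable (by fun_prop) _ _)
      (Continuous.intervalIntegrable (by fun_prop) _ _)]
    simp only [intervalIntegral.integral_const, intervalIntegral.integral_const_mul, integral_pow]
    norm_num
    ring
  have hle : radMean 0 (lapseLam Λ κ x φ) R
      ≤ radMean 0 (fun s => lapseBound κ x R - Λ * s ^ 2) R := by
    refine radMean_mono (by fun_prop) (by fun_prop) (fun r hr => ?_) ⟨hs.radius_pos.le, le_rfl⟩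
    have hupper := lapse_le hκ.le hs.pos.le hφ hr
    have hlower : Λ * r ^ 2 * 1 ≤ Λ * r ^ 2 * lapse κ x φ r :=
      mul_le_mul_of_nonneg_left (one_le_lapse hκ.le hr.1) (by positivity)
    rw [lapseLam]
    linarith
  rw [velocity]
  linarith [hs.bound_lt]

theorem isVelocity (hs : IsSmall Λ κ R x) {v : ℝ → ℝ → ℝ} (hv : Continuous ↿v) :
    IsVelocity R (fun u => velocity Λ κ x (v u)) (fun u r => r * dampingRate Λ κ x (v u) r) where
  continuous := by fun_prop
  continuous_deriv := by fun_prop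
  deriv u := hasDerivWithinAt_velocity (by fun_prop)
  nonpos u r hr :=
    mul_nonpos_of_nonneg_of_nonpos hr.1 (hs.dampingRate_nonpos (by fun_prop) hr)
  pos_zero u := by simp [velocity, radMean_zero_right, lapseLam, lapse]
  neg_right u := hs.velocity_right_neg (by fun_prop)
  bounded := by
    have hΛ := hs.cosm_pos
    refine ⟨max (lapseBound κ x R * (1 + Λ * R ^ 2) / 2) (R * (Λ / 2)), fun u r hr =>
      ⟨le_max_of_le_left ?_, le_max_of_le_right ?_⟩⟩
    · rw [velocity, abs_div, abs_two]
      exact div_le_div_of_nonneg_right (abs_radMean_le (by fun_prop) (fun r hr =>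
        abs_lapseLam_le hΛ.le hs.coupling_pos.le hs.pos.le (by fun_prop) hr) hr) zero_le_two
    · rw [abs_mul, abs_of_nonneg hr.1]
      exact mul_le_mul hr.2 (hs.abs_dampingRate_le (by fun_prop) hr) (abs_nonneg _)
        (hr.1.trans hr.2)

/-- The coefficients of the reduced equation, truncated at a small level. -/
def coeffs (hs : IsSmall Λ κ R x) : TransportCoeffs R where
  velocity := velocity Λ κ x
  damping φ r := r * dampingRate Λ κ x φ r
  source := source Λ κ x
  sourceDeriv := sourceDeriv Λ κ x
  isVelocity := hs.isVelocity
  continuous_source hv := by fun_prop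
  continuous_sourceDeriv hv := by fun_prop
  hasDerivWithinAt_source := hasDerivWithinAt_source
  sourceDeriv_le := ⟨R * Λ, mul_nonneg hs.radius_pos.le hs.cosm_pos.le,
    fun _ _ hφ hN _ hr => hs.abs_sourceDeriv_le hφ hN hr⟩
  preservesOsc_damping V := ((hasModulus_radius R V).mul
    (hasModulus_dampingRate hs.coupling_pos.le hs.pos.le hs.radius_pos.le)).preservesOsc
  preservesOsc_sourceDeriv _ :=
    (hasModulus_sourceDeriv hs.coupling_pos.le hs.pos.le hs.radius_pos.le).preservesOsc
  lipschitz_velocity _ :=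
    antiderivLipschitz_velocity hs.coupling_pos.le hs.pos.le hs.radius_pos.le
  lipschitz_source _ :=
    antiderivLipschitz_source hs.coupling_pos.le hs.pos.le hs.radius_pos.le

end IsSmall

/-! ### Maximum principles -/

section MaximumPrinciple

variable {Λ κ x R N₀ u r : ℝ} {F G h v : ℝ → ℝ → ℝ}

theorem IsCharSolution.abs_le_of_damped {D Y : ℝ → ℝ → ℝ} (hR : 0 ≤ R) (hF : IsVelocity R F G)
    (hD : Continuous ↿D) (hvc : Continuous ↿v) (hv : IsCharSolution R F D Y v)
    (hY : ∀ s, 0 ≤ s → ∀ N, (∀ r ∈ Icc 0 R, |v s r| ≤ N) →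
      ∀ r ∈ Icc 0 R, |Y s r| ≤ -D s r * N)
    (h₀ : ∀ r ∈ Icc 0 R, |v 0 r| ≤ N₀) (hu : 0 ≤ u) (hr : r ∈ Icc 0 R) : |v u r| ≤ N₀ := by
  simpa using hv.abs_le_mul_exp (C := 0) hR hF hD hvc
    (fun s hs _ N hN r hr => by linarith [hY s hs N hN r hr]) h₀ hu hr

theorem IsSmall.abs_deriv_le (hs : IsSmall Λ κ R x) (hF : IsVelocity R F G) (hv : Continuous ↿v)
    (hchar : IsCharSolution R F (fun u r => r * dampingRate Λ κ x (v u) r)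
      (fun u => sourceDeriv Λ κ x (v u)) v)
    (h₀ : ∀ r ∈ Icc 0 R, |v 0 r| ≤ N₀) (hu : 0 ≤ u) (hr : r ∈ Icc 0 R) : |v u r| ≤ N₀ := by
  have hchar' : IsCharSolution R F (fun u r => 2 * (r * dampingRate Λ κ x (v u) r))
      (fun u r => r * (defect Λ κ x (v u) r * radMean 1 (v u) r)) v :=
    hchar.congr fun s _ r _ => by
      rw [sourceDeriv]
      ring
  refine hchar'.abs_le_of_damped hs.radius_pos.le hF (by fun_prop) hv
    (fun s _ N hN r hr => ?_) h₀ hu hr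
  have hdefect : |defect Λ κ x (v s) r| ≤ -(2 * dampingRate Λ κ x (v s) r) := by
    linarith [hs.abs_defect_le (φ := v s) (by fun_prop) hr,
      (hs.dampingRate_mem (φ := v s) (by fun_prop) hr).2]
  have hsource := mul_le_mul hdefect (abs_radMean_le (k := 1) (by fun_prop) hN hr)
    (abs_nonneg _) ((abs_nonneg _).trans hdefect)
  rw [abs_mul, abs_mul, abs_of_nonneg hr.1]
  linarith [mul_le_mul_of_nonneg_left hsource hr.1]

theorem IsSmall.abs_le (hs : IsSmall Λ κ R x) (hF : IsVelocity R F G)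
    (hh : IsTransport R F (fun u => source Λ κ x (v u)) h v)
    (h₀ : ∀ r ∈ Icc 0 R, |h 0 r| ≤ N₀) (hu : 0 ≤ u) (hr : r ∈ Icc 0 R) : |h u r| ≤ N₀ := by
  have hv := hh.continuous_deriv
  -- `h - h̄ = r * radMean 1 v`, so that this is the equation `∂ᵤ h = F ∂ᵣ h + G h - G h̄`.
  have hchar : IsCharSolution R F (fun u r => r * dampingRate Λ κ x (v u) r)
      (fun u r => -(r * dampingRate Λ κ x (v u) r) * (h u r - r * radMean 1 (v u) r)) h :=
    hh.isCharSolution.congr fun s _ r _ => by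
      simp only [Pi.zero_apply, source]
      ring
  refine hchar.abs_le_of_damped hs.radius_pos.le hF (by fun_prop) hh.continuous
    (fun s hs₀ N hN r hr => ?_) h₀ hu hr
  have hdamping : 0 ≤ -(r * dampingRate Λ κ x (v s) r) := neg_nonneg.2
    (mul_nonpos_of_nonneg_of_nonpos hr.1 (hs.dampingRate_nonpos (by fun_prop) hr))
  rw [abs_mul, abs_of_nonneg hdamping]
  linarith [mul_le_mul_of_nonneg_left
    (abs_sub_mul_radMean_one_le (hh.deriv_right s hs₀) (by fun_prop) hN hr) hdamping]

end MaximumPrinciple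

/-! ### Identification of the coefficients -/

section Identification

variable {Λ κ x R u r : ℝ} {h : ℝ → ℝ → ℝ} {φ : ℝ → ℝ}

theorem sub_radAvg_eq (hh : ∀ r ∈ Icc 0 R, HasDerivWithinAt (h u) (φ r) (Icc 0 R) r)
    (hφ : Continuous φ) (hr : r ∈ Icc 0 R) : h u r - radAvg h u r = r * radMean 1 φ r := by
  rcases eq_or_ne r 0 with rfl | hr₀
  · simp [radAvg]
  · rw [radAvg, if_neg hr₀]
    refine mul_left_cancel₀ hr₀ ?_
    rw [mul_mul_radMean_one hh hφ hr]
    field_simp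

theorem metricF_eq (hh : ∀ r ∈ Icc 0 R, HasDerivWithinAt (h u) (φ r) (Icc 0 R) r)
    (hφ : Continuous φ) (hx : ∀ r ∈ Icc 0 R, |φ r| ≤ x) (hr : r ∈ Icc 0 R) :
    metricF κ h u r = lapse κ x φ r := by
  rw [metricF, lapse]
  congr 2
  refine intervalIntegral.integral_congr fun s hs => ?_
  rw [uIcc_of_le hr.1] at hs
  have hsR : s ∈ Icc 0 R := ⟨hs.1, hs.2.trans hr.2⟩
  have htrunc : truncMean x φ s = radMean 1 φ s :=
    clamp_of_mem (_root_.abs_le.1 (abs_radMean_le hφ hx hsR))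
  simp only [sub_radAvg_eq hh hφ hsR, htrunc]
  rcases eq_or_ne s 0 with rfl | hs₀
  · simp
  · field_simp

theorem integral_lapseLam (hφ : Continuous φ) :
    ∫ s in (0 : ℝ)..r, lapseLam Λ κ x φ s =
      (∫ s in (0 : ℝ)..r, lapse κ x φ s) - Λ * ∫ s in (0 : ℝ)..r, lapse κ x φ s * s ^ 2 := by
  rw [← intervalIntegral.integral_const_mul, ← intervalIntegral.integral_sub
    (Continuous.intervalIntegrable (by fun_prop) _ _)
    (Continuous.intervalIntegrable (by fun_prop) _ _)]
  refine intervalIntegral.integral_congr fun s _ => ?_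
  simp only [lapseLam]
  ring

theorem metricFt_eq (hh : ∀ r ∈ Icc 0 R, HasDerivWithinAt (h u) (φ r) (Icc 0 R) r)
    (hφ : Continuous φ) (hx : ∀ r ∈ Icc 0 R, |φ r| ≤ x) (hr : r ∈ Icc 0 R) :
    metricFt Λ κ h u r = 2 * velocity Λ κ x φ r := by
  rcases eq_or_ne r 0 with rfl | hr₀
  · simp [metricFt, velocity, radMean_zero_right, lapseLam, lapse]
  have hlapse : ∀ s ∈ uIcc 0 r, metricF κ h u s = lapse κ x φ s := fun s hs =>
    metricF_eq hh hφ hx (uIcc_subset_Icc (left_mem_Icc.2 (hr.1.trans hr.2)) hr hs)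
  have hmean := pow_mul_radMean 0 (lapseLam Λ κ x φ) r
  simp only [zero_add, pow_one, pow_zero, one_mul] at hmean
  rw [metricFt, if_neg hr₀, intervalIntegral.integral_congr hlapse,
    intervalIntegral.integral_congr (f := fun s => metricF κ h u s * s ^ 2)
      (g := fun s => lapse κ x φ s * s ^ 2) (fun s hs => by simp only [hlapse s hs]), velocity]
  refine mul_left_cancel₀ hr₀ ?_
  rw [mul_div_cancel₀ _ two_ne_zero, hmean, integral_lapseLam hφ]
  field_simp

theorem coefG_mul_eq (hh : ∀ r ∈ Icc 0 R, HasDerivWithinAt (h u) (φ r) (Icc 0 R) r)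
    (hφ : Continuous φ) (hx : ∀ r ∈ Icc 0 R, |φ r| ≤ x) (hr : r ∈ Icc 0 R) :
    coefG Λ κ h u r * (h u r - radAvg h u r) = source Λ κ x φ r := by
  rw [sub_radAvg_eq hh hφ hr, coefG, metricF_eq hh hφ hx hr, metricFt_eq hh hφ hx hr, source]
  rcases eq_or_ne r 0 with rfl | hr₀
  · simp
  have hvelocity := lapseLam_half_sub_velocity (Λ := Λ) (κ := κ) (x := x) hφ r
  rw [lapseLam] at hvelocity
  congr 1
  field_simp
  linear_combination 2 * hvelocity

end Identification

/-! ### Classical solutions -/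

section ClassicalSolutions

variable {Λ κ x R u r : ℝ} {h h' v : ℝ → ℝ → ℝ}

theorem IsTransport.pdR_eq {F S : ℝ → ℝ → ℝ} (hh : IsTransport R F S h v) (hR : 0 < R)
    (hu : 0 ≤ u) (hr : r ∈ Icc 0 R) : pdR R h u r = v u r :=
  (hh.deriv_right u hu r hr).derivWithin (uniqueDiffOn_Icc hR r hr)

theorem IsTransport.pdU_eq {F S : ℝ → ℝ → ℝ} (hh : IsTransport R F S h v)
    (hu : 0 ≤ u) (hr : r ∈ Icc 0 R) : pdU h u r = F u r * v u r + S u r :=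
  (hh.deriv_left u hu r hr).derivWithin (uniqueDiffOn_Ici 0 u hu)

theorem IsTransport.isC1Solution (hR : 0 < R)
    (hh : IsTransport R (fun u => velocity Λ κ x (v u)) (fun u => source Λ κ x (v u)) h v)
    (hx : ∀ u, 0 ≤ u → ∀ r ∈ Icc 0 R, |v u r| ≤ x) : IsC1Solution Λ κ R h := by
  have hv := hh.continuous_deriv
  refine ⟨hh.continuous.continuousOn, fun u hu r hr =>
    ⟨(hh.deriv_left u hu r hr).differentiableWithinAt,
      (hh.deriv_right u hu r hr).differentiableWithinAt⟩,
    ContinuousOn.congr (Continuous.continuousOn ?_) fun p hp => hh.pdU_eq hp.1 hp.2,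
    hv.continuousOn.congr fun p hp => hh.pdR_eq hR hp.1 hp.2, fun u hu r hr => ?_⟩
  · fun_prop
  · have hrR := Ioc_subset_Icc_self hr
    have hvu : Continuous (v u) := by fun_prop
    rw [coefG_mul_eq (hh.deriv_right u hu) hvu (hx u hu) hrR,
      metricFt_eq (hh.deriv_right u hu) hvu (hx u hu) hrR, hh.pdU_eq hu hrR, hh.pdR_eq hR hu hrR]
    ring

-- The equation, imposed for `0 < r`, extends to the center by continuity.
theorem IsC1Solution.pdU_eq (hh : IsC1Solution Λ κ R h) (hR : 0 < R) (hu : 0 ≤ u)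
    (hr : r ∈ Icc 0 R) :
    pdU h u r = metricFt Λ κ h u r / 2 * pdR R h u r
      + coefG Λ κ h u r * (h u r - radAvg h u r) := by
  obtain ⟨-, hdiff, hpdU, hpdR, heq⟩ := hh
  obtain ⟨v, hv, hvh⟩ := exists_continuous_extension hR.le hpdR
  have hvu : Continuous (v u) := by fun_prop
  have hpdR_eq : ∀ r ∈ Icc 0 R, pdR R h u r = v u r := fun r hr =>
    hvh (x := (u, r)) ⟨hu, hr⟩
  have hderiv : ∀ r ∈ Icc 0 R, HasDerivWithinAt (h u) (v u r) (Icc 0 R) r := fun r hr =>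
    hpdR_eq r hr ▸ (hdiff u hu r hr).2.hasDerivWithinAt
  obtain ⟨x, hx⟩ := isCompact_Icc.exists_bound_of_continuousOn (hvu.continuousOn (s := Icc 0 R))
  have hcoeffs : EqOn (fun r => metricFt Λ κ h u r / 2 * pdR R h u r
      + coefG Λ κ h u r * (h u r - radAvg h u r))
      (fun r => velocity Λ κ x (v u) r * v u r + source Λ κ x (v u) r) (Icc 0 R) := fun r hr => by
    simp only [hpdR_eq r hr, metricFt_eq hderiv hvu hx hr, coefG_mul_eq hderiv hvu hx hr]
    ring
  have hpdU_u : ContinuousOn (pdU h u) (Icc 0 R) :=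
    hpdU.comp (Continuous.prodMk_right u).continuousOn fun r hr => ⟨hu, hr⟩
  exact EqOn.of_subset_closure (fun r hr => sub_eq_iff_eq_add'.1 (heq u hu r hr)) hpdU_u
    ((Continuous.continuousOn (by fun_prop)).congr hcoeffs) Ioc_subset_Icc_self
    (closure_Ioc hR.ne).ge hr

theorem metricFt_congr {φ : ℝ → ℝ} (hφ : Continuous φ)
    (hh : ∀ r ∈ Icc 0 R, HasDerivWithinAt (h u) (φ r) (Icc 0 R) r)
    (hhk : EqOn (h u) (h' u) (Icc 0 R)) (hr : r ∈ Icc 0 R) :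
    metricFt Λ κ h u r = metricFt Λ κ h' u r := by
  obtain ⟨x, hx⟩ := isCompact_Icc.exists_bound_of_continuousOn (hφ.continuousOn (s := Icc 0 R))
  rw [metricFt_eq hh hφ hx hr,
    metricFt_eq (fun r hr => (hh r hr).congr_of_mem (fun s hs => (hhk hs).symm) hr) hφ hx hr]

theorem coefG_mul_congr {φ : ℝ → ℝ} (hφ : Continuous φ)
    (hh : ∀ r ∈ Icc 0 R, HasDerivWithinAt (h u) (φ r) (Icc 0 R) r)
    (hhk : EqOn (h u) (h' u) (Icc 0 R)) (hr : r ∈ Icc 0 R) :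
    coefG Λ κ h u r * (h u r - radAvg h u r) = coefG Λ κ h' u r * (h' u r - radAvg h' u r) := by
  obtain ⟨x, hx⟩ := isCompact_Icc.exists_bound_of_continuousOn (hφ.continuousOn (s := Icc 0 R))
  rw [coefG_mul_eq hh hφ hx hr,
    coefG_mul_eq (fun r hr => (hh r hr).congr_of_mem (fun s hs => (hhk hs).symm) hr) hφ hx hr]

theorem IsC1Solution.exists_isTransport (hh : IsC1Solution Λ κ R h) (hR : 0 < R) :
    ∃ k w, IsTransport R (fun u r => metricFt Λ κ k u r / 2)
      (fun u r => coefG Λ κ k u r * (k u r - radAvg k u r)) k w ∧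
      ∀ u, 0 ≤ u → EqOn (h u) (k u) (Icc 0 R) := by
  obtain ⟨hcont, hdiff, -, hpdR, -⟩ := id hh
  obtain ⟨k, hk, hhk⟩ := exists_continuous_extension hR.le hcont
  obtain ⟨w, hw, hpdRw⟩ := exists_continuous_extension hR.le hpdR
  have hhk_slice : ∀ u, 0 ≤ u → EqOn (h u) (k u) (Icc 0 R) := fun u hu r hr =>
    hhk (x := (u, r)) ⟨hu, hr⟩
  have hderiv : ∀ u, 0 ≤ u → ∀ r ∈ Icc 0 R, HasDerivWithinAt (h u) (w u r) (Icc 0 R) r :=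
    fun u hu r hr => (hdiff u hu r hr).2.hasDerivWithinAt.congr_deriv (hpdRw (x := (u, r)) ⟨hu, hr⟩)
  refine ⟨k, w, ⟨hk, hw, fun u hu r hr => (hderiv u hu r hr).congr_of_mem
    (fun s hs => (hhk_slice u hu hs).symm) hr, fun u hu r hr => ?_⟩, hhk_slice⟩
  have hwu : Continuous (w u) := by fun_prop
  rw [← metricFt_congr hwu (hderiv u hu) (hhk_slice u hu) hr,
    ← coefG_mul_congr hwu (hderiv u hu) (hhk_slice u hu) hr,
    ← (hderiv u hu r hr).derivWithin (uniqueDiffOn_Icc hR r hr)]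
  exact ((hdiff u hu r hr).1.hasDerivWithinAt.congr_deriv (hh.pdU_eq hR hu hr)).congr_of_mem
    (fun s hs => (hhk_slice s hs hr).symm) hu

theorem exists_metric_forcing_le (hκ : 0 ≤ κ) (hR : 0 ≤ R) (hx : 0 ≤ x) :
    ∃ C, 0 ≤ C ∧ ∀ u h₁ h₂ φ₁ φ₂ d w, IsC1Pair R (h₁ u) φ₁ → IsC1Pair R (h₂ u) φ₂ →
      (∀ r ∈ Icc 0 R, |φ₁ r| ≤ x) → (∀ r ∈ Icc 0 R, |φ₂ r| ≤ x) →
      (∀ r ∈ Icc 0 R, |h₁ u r - h₂ u r| ≤ d) → |w| ≤ x → ∀ r ∈ Icc 0 R,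
        |(metricFt Λ κ h₁ u r / 2 - metricFt Λ κ h₂ u r / 2) * w
          + (coefG Λ κ h₁ u r * (h₁ u r - radAvg h₁ u r)
            - coefG Λ κ h₂ u r * (h₂ u r - radAvg h₂ u r))| ≤ C * d := by
  obtain ⟨C, hC, hforcing⟩ := (antiderivLipschitz_velocity (Λ := Λ) (V := x) hκ hx
    hR).exists_forcing_le (antiderivLipschitz_source hκ hx hR)
  refine ⟨C, hC, fun u h₁ h₂ φ₁ φ₂ d w hp₁ hp₂ hφ₁ hφ₂ hd hw r hr => ?_⟩
  rw [metricFt_eq hp₁.deriv hp₁.continuous_deriv hφ₁ hr,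
    metricFt_eq hp₂.deriv hp₂.continuous_deriv hφ₂ hr,
    coefG_mul_eq hp₁.deriv hp₁.continuous_deriv hφ₁ hr,
    coefG_mul_eq hp₂.deriv hp₂.continuous_deriv hφ₂ hr,
    mul_div_cancel_left₀ _ two_ne_zero, mul_div_cancel_left₀ _ two_ne_zero]
  exact hforcing _ _ _ _ d w hp₁ hp₂ hφ₁ hφ₂ hd hw r hr

theorem IsC1Solution.eq_of_isTransport (hs : IsSmall Λ κ R x) (hh' : IsC1Solution Λ κ R h')
    (hh : IsTransport R (fun u => velocity Λ κ x (v u)) (fun u => source Λ κ x (v u)) h v)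
    (hx : ∀ u, 0 ≤ u → ∀ r ∈ Icc 0 R, |v u r| ≤ x) (h₀ : EqOn (h' 0) (h 0) (Icc 0 R))
    (hu : 0 ≤ u) (hr : r ∈ Icc 0 R) : h' u r = h u r := by
  have hv := hh.continuous_deriv
  obtain ⟨k, w, hk, hh'k⟩ := hh'.exists_isTransport hs.radius_pos
  obtain ⟨W, -, hW⟩ := exists_abs_le_of_continuous hk.continuous_deriv R u
  obtain ⟨C, -, hforcing⟩ := exists_metric_forcing_le (Λ := Λ) (x := max W x) hs.coupling_pos.le
    hs.radius_pos.le (hs.pos.le.trans (le_max_right _ _))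
  have hzero := (hh.isCharSolution_sub hk).abs_le_mul_exp (C := C) (N₀ := 0) hs.radius_pos.le
    (hs.isVelocity hv) continuous_zero (hh.continuous.sub hk.continuous)
    (fun s hs₀ hsu N hN r hr => ?_) (fun r hr => ?_) hu hr
  · rw [zero_mul, abs_nonpos_iff, sub_eq_zero] at hzero
    rw [hh'k u hu hr, hzero]
  · have hvs : Continuous (v s) := by fun_prop
    have hws : ∀ r ∈ Icc 0 R, |w s r| ≤ max W x := fun r hr =>
      (hW s ⟨hs₀, hsu⟩ r hr).trans (le_max_left _ _)
    have hvelocity : velocity Λ κ x (v s) r = metricFt Λ κ h s r / 2 := by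
      rw [metricFt_eq (hh.deriv_right s hs₀) hvs (hx s hs₀) hr]
      ring
    rw [Pi.zero_apply, Pi.zero_apply, zero_mul, zero_add, hvelocity,
      ← coefG_mul_eq (hh.deriv_right s hs₀) hvs (hx s hs₀) hr]
    exact hforcing s h k (v s) (w s) N (w s r) (hh.isC1Pair hs₀) (hk.isC1Pair hs₀)
      (fun r hr => (hx s hs₀ r hr).trans (le_max_right _ _)) hws hN (hws r hr) r hr
  · rw [← h₀ hr, hh'k 0 le_rfl hr, sub_self, abs_zero]

end ClassicalSolutions

/-! ### The small data problem -/

section SmallData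

variable {Λ κ x R : ℝ} {h₀ : ℝ → ℝ}

theorem isC1Pair_comp_clamp (hR : 0 < R) (hh₀ : ContDiffOn ℝ 1 h₀ (Icc 0 R)) :
    IsC1Pair R (h₀ ∘ clamp 0 R) (derivWithin h₀ (Icc 0 R) ∘ clamp 0 R) where
  continuous := hh₀.continuousOn.comp_continuous (continuous_clamp 0 R) (clamp_mem hR.le)
  continuous_deriv := (hh₀.continuousOn_derivWithin (uniqueDiffOn_Icc hR) le_rfl).comp_continuous
    (continuous_clamp 0 R) (clamp_mem hR.le)
  deriv r hr := by
    have hderiv := (hh₀.differentiableOn one_ne_zero r hr).hasDerivWithinAt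
    rw [Function.comp_apply, clamp_of_mem hr]
    exact hderiv.congr_of_mem (fun s hs => by rw [Function.comp_apply, clamp_of_mem hs]) hr

theorem IsSmall.exists_isTransport (hs : IsSmall Λ κ R x) (hh₀ : ContDiffOn ℝ 1 h₀ (Icc 0 R))
    {N₀ N₁ : ℝ} (hN₀ : ∀ r ∈ Icc 0 R, |h₀ r| ≤ N₀)
    (hN₁ : ∀ r ∈ Icc 0 R, |derivWithin h₀ (Icc 0 R) r| ≤ N₁) :
    ∃ h v, IsTransport R (fun u => velocity Λ κ x (v u)) (fun u => source Λ κ x (v u)) h v ∧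
      EqOn (h 0) h₀ (Icc 0 R) ∧
      (∀ u, 0 ≤ u → ∀ r ∈ Icc 0 R, |h u r| ≤ N₀) ∧
      ∀ u, 0 ≤ u → ∀ r ∈ Icc 0 R, |v u r| ≤ N₁ := by
  obtain ⟨h, v, hstep⟩ := hs.coeffs.exists_isStep_self hs.radius_pos
    (isC1Pair_comp_clamp hs.radius_pos hh₀)
  have hinit : EqOn (h 0) h₀ (Icc 0 R) := fun r hr => by
    rw [hstep.init hr, Function.comp_apply, clamp_of_mem hr]
  have hinit_deriv : EqOn (v 0) (derivWithin h₀ (Icc 0 R)) (Icc 0 R) := fun r hr => by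
    rw [hstep.init_deriv hr, Function.comp_apply, clamp_of_mem hr]
  have hF := hs.isVelocity hstep.isTransport.continuous_deriv
  exact ⟨h, v, hstep.isTransport, hinit,
    fun u hu r hr => hs.abs_le hF hstep.isTransport
      (fun r hr => (hinit hr).symm ▸ hN₀ r hr) hu hr,
    fun u hu r hr => hs.abs_deriv_le hF hstep.isTransport.continuous_deriv hstep.isCharSolution
      (fun r hr => (hinit_deriv hr).symm ▸ hN₁ r hr) hu hr⟩

theorem sSup_image2_abs_eq {h : ℝ → ℝ → ℝ} (hR : 0 ≤ R) (hinit : EqOn (h 0) h₀ (Icc 0 R))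
    (hle : ∀ u ∈ Ici (0 : ℝ), ∀ r ∈ Icc 0 R, |h u r| ≤ sSup ((fun r => |h₀ r|) '' Icc 0 R)) :
    sSup (image2 (fun u r => |h u r|) (Ici 0) (Icc 0 R)) =
      sSup ((fun r => |h₀ r|) '' Icc 0 R) := by
  have hzero : (0 : ℝ) ∈ Icc 0 R := left_mem_Icc.2 hR
  have hbound : ∀ y ∈ image2 (fun u r => |h u r|) (Ici 0) (Icc 0 R),
      y ≤ sSup ((fun r => |h₀ r|) '' Icc 0 R) := forall_mem_image2.2 hle
  refine le_antisymm (csSup_le ⟨_, mem_image2_of_mem self_mem_Ici hzero⟩ hbound)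
    (csSup_le_csSup ⟨_, hbound⟩ ⟨_, mem_image_of_mem _ hzero⟩ ?_)
  rintro _ ⟨r, hr, rfl⟩
  exact ⟨0, self_mem_Ici, r, hr, by simp only [hinit hr]⟩

/-- Both the equation and its coefficients are unchanged when a constant is added to `h`, so that
only the derivative of the data has to be small. -/
theorem global_existence_uniqueness_small_data_general
    (Λ κ R : ℝ) (hΛ : 0 < Λ) (hκ : 0 < κ) (hR : Real.sqrt (3 / Λ) < R) :
    ∃ ε₀ > (0 : ℝ), ∀ h₀ : ℝ → ℝ, ContDiffOn ℝ 1 h₀ (Icc 0 R) →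
      sSup ((fun r => |derivWithin h₀ (Icc 0 R) r|) '' Icc 0 R) < ε₀ →
      ∃ h : ℝ → ℝ → ℝ,
        (IsC1Solution Λ κ R h ∧
          (∀ r ∈ Icc (0 : ℝ) R, h 0 r = h₀ r) ∧
          sSup (Set.image2 (fun u r => |h u r|) (Ici 0) (Icc 0 R))
            = sSup ((fun r => |h₀ r|) '' Icc 0 R) ∧
          ∀ u ∈ Ici (0 : ℝ), ∀ r ∈ Icc (0 : ℝ) R,
            |h u r| ≤ sSup ((fun r => |h₀ r|) '' Icc 0 R) ∧
            |pdR R h u r| ≤ sSup ((fun r => |derivWithin h₀ (Icc 0 R) r|) '' Icc 0 R)) ∧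
        (∀ h' : ℝ → ℝ → ℝ, IsC1Solution Λ κ R h' →
          (∀ r ∈ Icc (0 : ℝ) R, h' 0 r = h₀ r) →
          ∀ u ∈ Ici (0 : ℝ), ∀ r ∈ Icc (0 : ℝ) R, h' u r = h u r) := by
  obtain ⟨x, hs⟩ := exists_isSmall hΛ hκ hR
  have hR₀ := hs.radius_pos
  refine ⟨x, hs.pos, fun h₀ hh₀ hsmall => ?_⟩
  have hle_sSup : ∀ φ : ℝ → ℝ, ContinuousOn φ (Icc 0 R) →
      ∀ r ∈ Icc 0 R, |φ r| ≤ sSup ((fun r => |φ r|) '' Icc 0 R) := fun φ hφ r hr =>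
    le_csSup (isCompact_Icc.bddAbove_image hφ.abs) (mem_image_of_mem _ hr)
  obtain ⟨h, v, htransport, hinit, hle, hle_deriv⟩ := hs.exists_isTransport hh₀
    (hle_sSup _ hh₀.continuousOn)
    (hle_sSup _ (hh₀.continuousOn_derivWithin (uniqueDiffOn_Icc hR₀) le_rfl))
  have hvx : ∀ u, 0 ≤ u → ∀ r ∈ Icc 0 R, |v u r| ≤ x := fun u hu r hr =>
    (hle_deriv u hu r hr).trans hsmall.le
  refine ⟨h, ⟨htransport.isC1Solution hR₀ hvx, hinit, sSup_image2_abs_eq hR₀.le hinit hle,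
    fun u hu r hr => ⟨hle u hu r hr, ?_⟩⟩, fun h' hh' hinit' u hu r hr =>
    hh'.eq_of_isTransport hs htransport hvx (fun r hr => (hinit' r hr).trans (hinit hr).symm) hu hr⟩
  rw [htransport.pdR_eq hR₀ hu hr]
  exact hle_deriv u hu r hr

end SmallData

/-- Global existence, uniqueness, and a priori bounds for small data:
for `Λ > 0`, `κ > 0`, `R > √(3/Λ)` there are `ε₀, C* > 0` such that any C¹ data `h₀` on
`[0,R]` with `sup|h₀| + sup|h₀'| < ε₀` evolves into a unique global C¹ solution of
`Dh = G(h − h̄)` with `sup|h| = sup|h₀|` and `sup(|h|+|∂_r h|) ≤ (1+C*)(sup|h₀|+sup|h₀'|)`. -/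
theorem global_existence_uniqueness_small_data
    (Λ κ R : ℝ) (hΛ : 0 < Λ) (hκ : 0 < κ) (hR : Real.sqrt (3 / Λ) < R) :
    ∃ ε₀ > (0:ℝ), ∃ Cstar > (0:ℝ), ∀ h₀ : ℝ → ℝ,
      ContDiffOn ℝ 1 h₀ (Icc 0 R) →
      sSup ((fun r => |h₀ r|) '' Icc 0 R)
        + sSup ((fun r => |derivWithin h₀ (Icc 0 R) r|) '' Icc 0 R) < ε₀ →
      ∃ h : ℝ → ℝ → ℝ,
        (IsC1Solution Λ κ R h ∧
          (∀ r ∈ Icc (0:ℝ) R, h 0 r = h₀ r) ∧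
          sSup (Set.image2 (fun u r => |h u r|) (Ici 0) (Icc 0 R))
            = sSup ((fun r => |h₀ r|) '' Icc 0 R) ∧
          (∀ u ∈ Ici (0:ℝ), ∀ r ∈ Icc (0:ℝ) R,
            |h u r| + |pdR R h u r|
              ≤ (1 + Cstar) * (sSup ((fun r => |h₀ r|) '' Icc 0 R)
                  + sSup ((fun r => |derivWithin h₀ (Icc 0 R) r|) '' Icc 0 R)))) ∧
        (∀ h' : ℝ → ℝ → ℝ, IsC1Solution Λ κ R h' →
          (∀ r ∈ Icc (0:ℝ) R, h' 0 r = h₀ r) →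
          ∀ u ∈ Ici (0:ℝ), ∀ r ∈ Icc (0:ℝ) R, h' u r = h u r) := by
  obtain ⟨ε₀, hε₀, hsolve⟩ := global_existence_uniqueness_small_data_general Λ κ R hΛ hκ hR
  refine ⟨ε₀, hε₀, 1, one_pos, fun h₀ hh₀ hsmall => ?_⟩
  have hnonneg : ∀ φ : ℝ → ℝ, 0 ≤ sSup ((fun r => |φ r|) '' Icc 0 R) := fun φ =>
    Real.sSup_nonneg (forall_mem_image.2 fun r _ => abs_nonneg (φ r))
  have hnonneg₀ := hnonneg h₀
  have hnonneg₁ := hnonneg (derivWithin h₀ (Icc 0 R))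
  obtain ⟨h, ⟨hsol, hinit, hsup, hle⟩, hunique⟩ := hsolve h₀ hh₀ (by linarith)
  refine ⟨h, ⟨hsol, hinit, hsup, fun u hu r hr => ?_⟩, hunique⟩
  linarith [(hle u hu r hr).1, (hle u hu r hr).2]
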